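/- arXiv:1512.07439 — 5 statements merged into one kernel-verified Lean document; each statement's English description precedes it below -/
import Mathlib

section
/- Let B be a noetherian algebra, Q a finitely generated projective left B-module, and P a B-submodule of Q such that Q/P is finite dimensional over k. Then P is almost flat: for every injective morphism f : X → Y of finitely generated right B-modules, the kernel of f ⊗_B P : X ⊗_B P → Y ⊗_B P is finite dimensional. -/
open TensorProduct MulOpposite

/-- The `k`-subspace of `N ⊗[k] P` spanned by the balancing relations
`(n·b) ⊗ p − n ⊗ (b·p)`, used to define the tensor product `N ⊗_B P` of a right
`B`-module `N` and a left `B`-module `P` over a (noncommutative) `k`-algebra `B`. -/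
def balRel (k B : Type) [Field k] [Ring B] [Algebra k B]
    (N P : Type) [AddCommGroup N] [Module Bᵐᵒᵖ N] [Module k N] [IsScalarTower k Bᵐᵒᵖ N]
    [AddCommGroup P] [Module B P] [Module k P] [IsScalarTower k B P] :
    Submodule k (N ⊗[k] P) :=
  Submodule.span k {x | ∃ (n : N) (b : B) (p : P),
    x = (op b • n) ⊗ₜ[k] p - n ⊗ₜ[k] (b • p)}

/-- The tensor product `N ⊗_B P` of a right `B`-module `N` and a left `B`-module `P`,
realized as the quotient of `N ⊗[k] P` by the balancing relations. -/
abbrev TensorB (k B : Type) [Field k] [Ring B] [Algebra k B]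
    (N P : Type) [AddCommGroup N] [Module Bᵐᵒᵖ N] [Module k N] [IsScalarTower k Bᵐᵒᵖ N]
    [AddCommGroup P] [Module B P] [Module k P] [IsScalarTower k B P] :=
  (N ⊗[k] P) ⧸ balRel k B N P

/-- The map `f ⊗_B P : N ⊗_B P → N' ⊗_B P` induced by a morphism of right `B`-modules
`f : N → N'`. -/
noncomputable def tensorMapB (k B : Type) [Field k] [Ring B] [Algebra k B]
    (N N' P : Type) [AddCommGroup N] [Module Bᵐᵒᵖ N] [Module k N] [IsScalarTower k Bᵐᵒᵖ N]
    [AddCommGroup N'] [Module Bᵐᵒᵖ N'] [Module k N'] [IsScalarTower k Bᵐᵒᵖ N']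
    [AddCommGroup P] [Module B P] [Module k P] [IsScalarTower k B P]
    (f : N →ₗ[Bᵐᵒᵖ] N') : TensorB k B N P →ₗ[k] TensorB k B N' P :=
  Submodule.mapQ _ _ (TensorProduct.map (f.restrictScalars k) LinearMap.id) (by
    rw [balRel, Submodule.span_le]
    rintro _ ⟨n, b, p, rfl⟩
    simp only [SetLike.mem_coe, Submodule.mem_comap, map_sub, TensorProduct.map_tmul,
      LinearMap.coe_restrictScalars, LinearMap.id_coe, id_eq, map_smul]
    exact Submodule.subset_span ⟨f n, b, p, rfl⟩)

section helpers
variable {k B : Type} [Field k] [Ring B] [Algebra k B]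

/-- The balanced map `n ⊗ p ↦ n · φ p`. -/
noncomputable def almostFlatEval
    (N P : Type) [AddCommGroup N] [Module Bᵐᵒᵖ N] [Module k N] [IsScalarTower k Bᵐᵒᵖ N]
    [AddCommGroup P] [Module B P] [Module k P] [IsScalarTower k B P]
    (φ : P →ₗ[B] B) : TensorB k B N P →ₗ[k] N :=
  Submodule.liftQ _ (TensorProduct.lift (LinearMap.mk₂ k (fun n p => op (φ p) • n)
    (fun a b p => smul_add _ _ _)
    (fun c n p => by
      rw [← algebraMap_smul Bᵐᵒᵖ c n, ← algebraMap_smul Bᵐᵒᵖ c, smul_smul, smul_smul,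
        Algebra.commutes])
    (fun n p q => by rw [map_add, op_add, add_smul])
    (fun c n p => by
      rw [← algebraMap_smul B c p, map_smul, algebraMap_smul, op_smul, smul_assoc]))) (by
    rw [balRel, Submodule.span_le]
    rintro _ ⟨n, b, p, rfl⟩
    simp [smul_smul])

theorem almostFlatEval_mk
    (N P : Type) [AddCommGroup N] [Module Bᵐᵒᵖ N] [Module k N] [IsScalarTower k Bᵐᵒᵖ N]
    [AddCommGroup P] [Module B P] [Module k P] [IsScalarTower k B P]
    (φ : P →ₗ[B] B) (n : N) (p : P) :
    almostFlatEval (k := k) N P φ ((balRel k B N P).mkQ (n ⊗ₜ[k] p)) = op (φ p) • n := by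
  simp [almostFlatEval]

theorem tensorB_balance
    (N P : Type) [AddCommGroup N] [Module Bᵐᵒᵖ N] [Module k N] [IsScalarTower k Bᵐᵒᵖ N]
    [AddCommGroup P] [Module B P] [Module k P] [IsScalarTower k B P]
    (n : N) (b : B) (p : P) :
    (balRel k B N P).mkQ ((op b • n) ⊗ₜ[k] p) = (balRel k B N P).mkQ (n ⊗ₜ[k] (b • p)) := by
  rw [← sub_eq_zero, ← map_sub, Submodule.mkQ_apply, Submodule.Quotient.mk_eq_zero]
  exact Submodule.subset_span ⟨n, b, p, rfl⟩

theorem tensorB_exists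
    (N P : Type) [AddCommGroup N] [Module Bᵐᵒᵖ N] [Module k N] [IsScalarTower k Bᵐᵒᵖ N]
    [AddCommGroup P] [Module B P] [Module k P] [IsScalarTower k B P]
    {n : ℕ} (x : Fin n → N) (hx : Submodule.span Bᵐᵒᵖ (Set.range x) = ⊤)
    (z : TensorB k B N P) :
    ∃ p : Fin n → P, z = ∑ i, (balRel k B N P).mkQ (x i ⊗ₜ[k] p i) := by
  obtain ⟨t, rfl⟩ := Submodule.mkQ_surjective _ z
  induction t with
  | zero => exact ⟨0, by simp⟩
  | tmul y p =>
    have hy : y ∈ Submodule.span Bᵐᵒᵖ (Set.range x) := hx ▸ Submodule.mem_top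
    obtain ⟨c, rfl⟩ := (Submodule.mem_span_range_iff_exists_fun _).1 hy
    refine ⟨fun i => unop (c i) • p, ?_⟩
    rw [TensorProduct.sum_tmul, map_sum]
    exact Finset.sum_congr rfl fun i _ => by rw [← tensorB_balance, op_unop]
  | add a b ha hb =>
    obtain ⟨p, hp⟩ := ha
    obtain ⟨q, hq⟩ := hb
    exact ⟨p + q, by
      simp only [map_add, hp, hq, Pi.add_apply, TensorProduct.tmul_add, Finset.sum_add_distrib]⟩

theorem finiteDimensional_range_of_ker_le {S V W : Type} [AddCommGroup S] [Module k S]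
    [AddCommGroup V] [Module k V] [AddCommGroup W] [Module k W] [FiniteDimensional k V]
    (h : S →ₗ[k] V) (g : S →ₗ[k] W) (hle : LinearMap.ker h ≤ LinearMap.ker g) :
    FiniteDimensional k (LinearMap.range g) := by
  haveI : FiniteDimensional k (S ⧸ LinearMap.ker h) :=
    Module.Finite.equiv h.quotKerEquivRange.symm
  have : LinearMap.range g = LinearMap.range ((LinearMap.ker h).liftQ g hle) := by
    rw [Submodule.range_liftQ]
  rw [this]
  infer_instance

end helpers

/-- Let `B` be a noetherian algebra, `Q` a finitely generated projective left `B`-module,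
and `P` a `B`-submodule of `Q` such that `Q/P` is finite-dimensional over `k`.  Then `P` is
almost flat: for every injective morphism `f : X → Y` of finitely generated right
`B`-modules, the kernel of `f ⊗_B P` is finite-dimensional. -/
theorem almost_flat_of_cofinite_in_projective
    (k B : Type) [Field k] [CharZero k] [Ring B] [Algebra k B]
    [IsNoetherianRing B] [IsNoetherianRing Bᵐᵒᵖ]
    (Q : Type) [AddCommGroup Q] [Module B Q] [Module k Q] [IsScalarTower k B Q]
    [Module.Finite B Q] [Module.Projective B Q]
    (P : Submodule B Q)
    (hcofin : FiniteDimensional k (Q ⧸ (P.restrictScalars k))) :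
    ∀ (X Y : Type) [AddCommGroup X] [Module Bᵐᵒᵖ X] [Module k X]
      [IsScalarTower k Bᵐᵒᵖ X] [Module.Finite Bᵐᵒᵖ X]
      [AddCommGroup Y] [Module Bᵐᵒᵖ Y] [Module k Y]
      [IsScalarTower k Bᵐᵒᵖ Y] [Module.Finite Bᵐᵒᵖ Y]
      (f : X →ₗ[Bᵐᵒᵖ] Y), Function.Injective f →
        FiniteDimensional k (LinearMap.ker (tensorMapB k B X Y (↥P) f)) := by
  intro X Y _ _ _ _ _ _ _ _ _ _ f hf
  haveI : SMulCommClass k B Q := IsScalarTower.to_smulCommClass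
  obtain ⟨m, e, s, -, -, hes⟩ := Module.Finite.exists_comp_eq_id_of_projective B Q
  obtain ⟨n, x, hx⟩ := Submodule.fg_iff_exists_fin_generating_family.1
    (Module.Finite.fg_top (R := Bᵐᵒᵖ) (M := X))
  obtain ⟨r, κ, hκ⟩ := Submodule.fg_iff_exists_fin_generating_family.1
    (IsNoetherian.noetherian (LinearMap.ker (Fintype.linearCombination Bᵐᵒᵖ x)))
  have hκ0 : ∀ l, ∑ i, κ l i • x i = 0 := fun l => by
    have : κ l ∈ LinearMap.ker (Fintype.linearCombination Bᵐᵒᵖ x) :=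
      hκ ▸ Submodule.subset_span ⟨l, rfl⟩
    simpa [Fintype.linearCombination_apply] using this
  -- the relations acting on `Q`
  let θ : (Fin r → Q) →ₗ[k] (Fin n → Q) := LinearMap.pi fun i =>
    ∑ l, (Module.toModuleEnd k (S := B) Q (unop (κ l i))).comp (LinearMap.proj l)
  have hθ : ∀ q i, θ q i = ∑ l, unop (κ l i) • q l := fun q i => by
    simp [θ, LinearMap.sum_apply]
  let S : Submodule k (Fin r → Q) :=
    (Submodule.pi Set.univ fun _ : Fin n => P.restrictScalars k).comap θ
  have hS : ∀ q : S, ∀ i, θ q i ∈ P := fun q i => q.2 i trivial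
  let g : S →ₗ[k] TensorB k B X P := ∑ i,
    (balRel k B X P).mkQ ∘ₗ (TensorProduct.mk k X P (x i)) ∘ₗ
      (LinearMap.codRestrict (P.restrictScalars k)
        ((LinearMap.proj i).comp (θ.comp S.subtype)) (fun q => hS q i))
  have hg : ∀ q : S, g q = ∑ i, (balRel k B X P).mkQ (x i ⊗ₜ[k] ⟨θ q i, hS q i⟩) := fun q => by
    simp only [g, LinearMap.sum_apply]
    rfl
  let h : S →ₗ[k] (Fin r → Q ⧸ (P.restrictScalars k)) :=
    (LinearMap.pi fun l => (P.restrictScalars k).mkQ ∘ₗ LinearMap.proj l) ∘ₗ S.subtype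
  have hker : LinearMap.ker h ≤ LinearMap.ker g := by
    intro q hq
    have hqP : ∀ l, (q : Fin r → Q) l ∈ P := fun l => by
      have := congrFun (LinearMap.mem_ker.1 hq) l
      simpa [h] using this
    rw [LinearMap.mem_ker, hg]
    have h1 : ∀ i, (⟨θ q i, hS q i⟩ : P) =
        ∑ l, unop (κ l i) • (⟨(q : Fin r → Q) l, hqP l⟩ : P) := fun i => by
      apply Subtype.ext
      simp [hθ]
    simp only [h1, TensorProduct.tmul_sum, map_sum, ← tensorB_balance, op_unop]
    rw [Finset.sum_comm]
    refine Finset.sum_eq_zero fun l _ => ?_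
    rw [← map_sum, ← TensorProduct.sum_tmul, hκ0, TensorProduct.zero_tmul, map_zero]
  haveI := finiteDimensional_range_of_ker_le h g hker
  refine Submodule.finiteDimensional_of_le (S₂ := LinearMap.range g) ?_
  intro z hz
  obtain ⟨p, rfl⟩ := tensorB_exists X P x hx z
  have hz' : ∑ i, (balRel k B Y P).mkQ (f (x i) ⊗ₜ[k] p i) = 0 := by
    rw [LinearMap.mem_ker, map_sum] at hz
    exact hz
  have hrel : ∀ j, ∑ i, op (s (p i) j) • x i = 0 := fun j => by
    apply hf
    have := congrArg (almostFlatEval (k := k) Y P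
      ((LinearMap.proj j).comp (s.comp P.subtype))) hz'
    simp only [map_sum, almostFlatEval_mk, map_zero] at this
    simpa using this
  have hb : ∀ j, ∃ b : Fin r → Bᵐᵒᵖ, ∑ l, b l • κ l = fun i => op (s (p i) j) := fun j => by
    refine (Submodule.mem_span_range_iff_exists_fun _).1 ?_
    rw [hκ, LinearMap.mem_ker, Fintype.linearCombination_apply]
    exact hrel j
  choose b hb using hb
  let q : Fin r → Q := fun l => ∑ j, unop (b j l) • e (Pi.single j 1)
  have hq : ∀ i, θ q i = p i := fun i => by
    have hp : (p i : Q) = ∑ j, s (p i) j • e (Pi.single j 1) := by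
      conv_lhs => rw [← LinearMap.id_apply (R := B) (p i : Q), ← hes, LinearMap.comp_apply,
        pi_eq_sum_univ' (s (p i)), map_sum]
      refine Finset.sum_congr rfl fun j _ => ?_
      rw [map_smul]
    rw [hθ, hp]
    simp only [q, Finset.smul_sum, smul_smul]
    rw [Finset.sum_comm]
    refine Finset.sum_congr rfl fun j _ => ?_
    rw [← Finset.sum_smul]
    congr 1
    have := congrArg unop (congrFun (hb j) i)
    simpa using this
  refine ⟨⟨q, fun i _ => by
    show θ q i ∈ P
    rw [hq]; exact (p i).2⟩, ?_⟩
  rw [hg]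
  exact Finset.sum_congr rfl fun i _ => by simp only [hq]
end

section
/- Let B be a noetherian algebra and J a left ideal of B such that B/J is finite dimensional over k. Then J, viewed as a left B-module, is faithful in the following sense: for every finitely generated right B-module X, if X ⊗_B J is finite dimensional, then X is finite dimensional. -/
open TensorProduct MulOpposite

/-- Let `B` be a noetherian algebra and `J` a left ideal of `B` (a `B`-submodule of `B`)
such that `B/J` is finite-dimensional over `k`.  Then `J`, viewed as a left `B`-module, is
faithful: for every finitely generated right `B`-module `X`, if `X ⊗_B J` is
finite-dimensional, then `X` is finite-dimensional. -/
theorem cofinite_left_ideal_faithful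
    (k B : Type) [Field k] [CharZero k] [Ring B] [Algebra k B]
    [IsNoetherianRing B] [IsNoetherianRing Bᵐᵒᵖ]
    (J : Submodule B B)
    (hcofin : FiniteDimensional k (B ⧸ (J.restrictScalars k))) :
    ∀ (X : Type) [AddCommGroup X] [Module Bᵐᵒᵖ X] [Module k X]
      [IsScalarTower k Bᵐᵒᵖ X] [Module.Finite Bᵐᵒᵖ X],
      FiniteDimensional k (TensorB k B X (↥J)) → FiniteDimensional k X := by
  intro X _ _ _ _ _ hT
  -- right multiplication on a fixed element
  let f : X → B →ₗ[k] X := fun s =>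
    ((LinearMap.toSpanSingleton Bᵐᵒᵖ X s).restrictScalars k) ∘ₗ
      (opLinearEquiv k : B ≃ₗ[k] Bᵐᵒᵖ).toLinearMap
  have hf : ∀ s b, f s b = op b • s := fun s b => rfl
  let g : X →ₗ[k] (J →ₗ[k] X) := LinearMap.mk₂ k (fun x (j : J) => op (j : B) • x)
    (fun x y j => smul_add _ _ _)
    (fun c x j => by
      rw [← algebraMap_smul Bᵐᵒᵖ c x, ← algebraMap_smul Bᵐᵒᵖ c (op (j : B) • x),
        smul_smul, smul_smul, Algebra.commutes])
    (fun x i j => by simp [add_smul])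
    (fun c x j => by
      change op (c • (j : B)) • x = _
      rw [op_smul, smul_assoc])
  let m : TensorB k B X J →ₗ[k] X := Submodule.liftQ _ (TensorProduct.lift g) (by
    rw [balRel, Submodule.span_le]
    rintro _ ⟨n, b, p, rfl⟩
    simp [g, LinearMap.mk₂_apply, smul_smul])
  have hm : ∀ x (j : J), op (j : B) • x ∈ LinearMap.range m := fun x j =>
    ⟨Submodule.Quotient.mk (x ⊗ₜ[k] j), by
      change TensorProduct.lift g (x ⊗ₜ[k] j) = _
      simp [g]⟩
  obtain ⟨W, hW⟩ := Submodule.exists_isCompl (J.restrictScalars k)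
  have hWf : FiniteDimensional k W :=
    LinearEquiv.finiteDimensional (Submodule.quotientEquivOfIsCompl _ W hW)
  obtain ⟨S, hS⟩ := (Module.Finite.fg_top : (⊤ : Submodule Bᵐᵒᵖ X).FG)
  let T : Submodule k X := LinearMap.range m ⊔ S.sup (fun s => W.map (f s))
  have hTfin : FiniteDimensional k T := by
    haveI : FiniteDimensional k (S.sup (fun s => W.map (f s)) : Submodule k X) :=
      Submodule.finiteDimensional_finset_sup S _
    exact Submodule.finiteDimensional_sup _ _
  have hTtop : T = ⊤ := by
    rw [eq_top_iff]
    intro x _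
    have hx : x ∈ Submodule.span Bᵐᵒᵖ (S : Set X) := by rw [hS]; trivial
    induction hx using Submodule.closure_induction with
    | zero => exact zero_mem _
    | add x y _ _ hx hy => exact add_mem (hx trivial) (hy trivial)
    | smul_mem r s hs =>
      have hr : r.unop ∈ J.restrictScalars k ⊔ W := by
        rw [hW.sup_eq_top]; trivial
      obtain ⟨j, hj, w, hw, hjw⟩ := Submodule.mem_sup.mp hr
      have : r • s = op j • s + op w • s := by
        rw [← add_smul, ← op_add, hjw, op_unop]
      rw [this]
      refine add_mem (Submodule.mem_sup_left (hm s ⟨j, hj⟩)) (Submodule.mem_sup_right ?_)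
      exact (Finset.le_sup (f := fun s => W.map (f s)) hs) ⟨w, hw, hf s w⟩
  rw [hTtop] at hTfin
  exact LinearEquiv.finiteDimensional (Submodule.topEquiv : (⊤ : Submodule k X) ≃ₗ[k] X)
end

section
/- Let H be a finite-dimensional semisimple Hopf algebra over k, A a noetherian left H-module algebra, B = A#H the smash product, and t ∈ H a nonzero integral with ε(t) = 1. Define a right B-module M to be t-torsion if m(A#t) is finite dimensional for every m ∈ M. Then the class T of t-torsion right B-modules is closed under submodules, quotients, extensions, and arbitrary direct sums (i.e., it is a localizing Serre subcategory of Mod B). -/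
open TensorProduct MulOpposite

/-- For a left `H`-module algebra `A`, the action on a fixed element `a ∈ A` as a
`k`-linear map `H →ₗ[k] A`, `h ↦ h • a`. -/
def actL (k H A : Type) [Field k] [Ring H] [Algebra k H] [Ring A] [Algebra k A]
    [Module H A] [IsScalarTower k H A] (a : A) : H →ₗ[k] A where
  toFun h := h • a
  map_add' h h' := add_smul h h' a
  map_smul' c h := smul_assoc c h a

/-- A right `B`-module `M` is `t`-torsion when `m·(A#t)` is finite-dimensional for every
`m ∈ M`; here the smash product `B = A#H` is presented by a linear isomorphism
`ψ : A ⊗[k] H ≃ B`, and `a#t = ψ (a ⊗ t)`. -/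
def IsTTorsion (k H A B : Type) [Field k] [Ring H] [Algebra k H] [Ring A] [Algebra k A]
    [Module H A] [IsScalarTower k H A] [Ring B] [Algebra k B]
    (ψ : (A ⊗[k] H) ≃ₗ[k] B) (t : H)
    (M : Type) [AddCommGroup M] [Module Bᵐᵒᵖ M] [Module k M] [IsScalarTower k Bᵐᵒᵖ M] :
    Prop :=
  ∀ m : M, FiniteDimensional k
    (Submodule.span k {x | ∃ a : A, x = op (ψ (a ⊗ₜ[k] t)) • m})

section Helpers
open Coalgebra HopfAlgebra WithConv

/-- In a semisimple Hopf algebra a left integral with `ε t = 1` is a right integral. -/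
lemma tt_right_integral (k H : Type) [Field k] [Ring H] [HopfAlgebra k H] [IsSemisimpleRing H]
    (t : H) (htint : ∀ h : H, h * t = (counit (R := k) h) • t) (h : H)
    (ht1 : counit (R := k) t = 1) :
    t * h = (counit (R := k) h) • t := by
  have key : ∀ z : H, counit (R := k) z = 0 → t * z = 0 := by
    intro z hz
    obtain ⟨e, he, hI⟩ := IsSemisimpleRing.ideal_eq_span_idempotent (Ideal.span {t * z})
    have h1 : e ∈ Ideal.span {t * z} := by rw [hI]; exact Ideal.mem_span_singleton_self e
    have h2 : t * z ∈ Ideal.span {e} := by rw [← hI]; exact Ideal.mem_span_singleton_self _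
    obtain ⟨r, hr⟩ := Ideal.mem_span_singleton'.mp h1
    obtain ⟨s, hs⟩ := Ideal.mem_span_singleton'.mp h2
    have h0 : e * e = 0 := by
      rw [← hr]
      have : r * (t * z) * (r * (t * z)) = r * t * ((z * r) * t) * z := by noncomm_ring
      rw [this, htint (z * r), Bialgebra.counit_mul, hz]; simp
    have he0 : e = 0 := by rw [← he.eq]; exact h0
    rw [← hs, he0, mul_zero]
  have := key (h - algebraMap k H (counit (R := k) h)) (by simp)
  rw [mul_sub, sub_eq_zero] at this
  rw [this, ← Algebra.commutes, Algebra.smul_def]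

variable {k H B : Type} [Field k] [Ring H] [HopfAlgebra k H] [Ring B] [Algebra k B]

lemma tt_conv_left (j : H →ₐ[k] B) :
    toConv (j.toLinearMap ∘ₗ antipode k) * toConv j.toLinearMap
      = (1 : WithConv (H →ₗ[k] B)) := by
  ext x
  rw [(ℛ k x).convMul_apply]
  simp [← map_mul, ← map_sum, sum_antipode_mul_eq_algebraMap_counit (ℛ k x)]

lemma tt_conv_right (j : H →ₐ[k] B) :
    toConv j.toLinearMap * toConv (j.toLinearMap ∘ₗ antipode k)
      = (1 : WithConv (H →ₗ[k] B)) := by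
  ext x
  rw [(ℛ k x).convMul_apply]
  simp [← map_mul, ← map_sum, sum_mul_antipode_eq_algebraMap_counit (ℛ k x)]

/-- `Σ S(t₁) G(t₂)`. -/
noncomputable def ttQ (j : H →ₐ[k] B) (t : H) : (H →ₗ[k] B) →ₗ[k] B where
  toFun G := (toConv (j.toLinearMap ∘ₗ antipode k) * toConv G) t
  map_add' G G' := by
    rw [(ℛ k t).convMul_apply, (ℛ k t).convMul_apply, (ℛ k t).convMul_apply]
    simp [mul_add, Finset.sum_add_distrib]
  map_smul' c G := by
    rw [(ℛ k t).convMul_apply, (ℛ k t).convMul_apply]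
    simp [Finset.smul_sum]

lemma ttQ_apply (j : H →ₐ[k] B) (t : H) (G : H →ₗ[k] B) : ttQ j t G =
    ∑ i ∈ (ℛ k t).index, j (antipode k ((ℛ k t).left i)) * G ((ℛ k t).right i) := by
  change (toConv (j.toLinearMap ∘ₗ antipode k) * toConv G) t = _
  rw [(ℛ k t).convMul_apply]; rfl

lemma ttQ_mulRight (j : H →ₐ[k] B) (t : H) (G : H →ₗ[k] B) (c : B) :
    ttQ j t (LinearMap.mulRight k c ∘ₗ G) = ttQ j t G * c := by
  simp [ttQ_apply, Finset.sum_mul, mul_assoc]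

lemma ttQ_j (j : H →ₐ[k] B) (t : H) (ht1 : counit (R := k) t = 1) :
    ttQ j t j.toLinearMap = 1 := by
  change (toConv (j.toLinearMap ∘ₗ antipode k) * toConv j.toLinearMap) t = _
  rw [tt_conv_left]; simp [ht1]

/-- Casimir property. -/
lemma ttQ_casimir (j : H →ₐ[k] B) (t : H) (htr : ∀ h : H, t * h = (counit (R := k) h) • t)
    (G : H →ₗ[k] B) (h : H) :
    ttQ j t (G ∘ₗ LinearMap.mulRight k h) = j h * ttQ j t G := by
  let K : H →ₗ[k] B :=
    ttQ j t ∘ₗ (LinearMap.llcomp k H H B G) ∘ₗ (LinearMap.mul k H).flip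
  have hK : ∀ g, K g = ttQ j t (G ∘ₗ LinearMap.mulRight k g) := fun g => rfl
  have h1 : toConv (j.toLinearMap ∘ₗ antipode k) * toConv K
      = toConv (LinearMap.toSpanSingleton k B (ttQ j t G) ∘ₗ (counit : H →ₗ[k] k)) := by
    ext g
    have e1 : (toConv (j.toLinearMap ∘ₗ antipode k) * toConv G) (t * g)
        = counit (R := k) g • ttQ j t G := by
      rw [htr]
      change (toConv (j.toLinearMap ∘ₗ antipode k) * toConv G).ofConv _ = _
      rw [map_smul]; rfl
    rw [((ℛ k t).mul (ℛ k g)).convMul_apply] at e1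
    rw [(ℛ k g).convMul_apply]
    refine Eq.trans ?_ e1
    simp [hK, ttQ_apply, Finset.sum_product_right, Finset.mul_sum, antipode_mul_antidistrib,
      mul_assoc]
  have h2 : toConv K = toConv j.toLinearMap *
      toConv (LinearMap.toSpanSingleton k B (ttQ j t G) ∘ₗ (counit : H →ₗ[k] k)) := by
    rw [← h1, ← mul_assoc, tt_conv_right, one_mul]
  have h3 : (toConv K) h = (toConv j.toLinearMap *
      toConv (LinearMap.toSpanSingleton k B (ttQ j t G) ∘ₗ (counit : H →ₗ[k] k))) h := by
    rw [h2]
  rw [← hK]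
  refine h3.trans ?_
  rw [(ℛ k h).convMul_apply]
  have h4 : ∑ i ∈ (ℛ k h).index, counit (R := k) ((ℛ k h).right i) • (ℛ k h).left i = h := by
    have := congrArg (TensorProduct.rid k H) (sum_tmul_counit_eq (ℛ k h))
    simpa only [map_sum, TensorProduct.rid_tmul, one_smul] using this
  conv_rhs => rw [← h4]
  rw [map_sum, Finset.sum_mul]
  refine Finset.sum_congr rfl fun i _ => ?_
  change j _ * (counit (R := k) ((ℛ k h).right i) • ttQ j t G) = _
  rw [map_smul, smul_mul_assoc, mul_smul_comm]

/-- Commutation with the elements of `A`. -/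
lemma ttQ_comm (j : H →ₐ[k] B) (t : H) (a : B) (L : H →ₗ[k] B)
    (hL : toConv L * toConv j.toLinearMap = toConv (LinearMap.mulRight k a ∘ₗ j.toLinearMap))
    (T : B →ₗ[k] B) (hT : ∀ x y, T (L x * y) = L x * T y) :
    ttQ j t (T ∘ₗ LinearMap.mulRight k a ∘ₗ j.toLinearMap)
      = a * ttQ j t (T ∘ₗ j.toLinearMap) := by
  have e1 : toConv (T ∘ₗ LinearMap.mulRight k a ∘ₗ j.toLinearMap)
      = toConv L * toConv (T ∘ₗ j.toLinearMap) := by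
    ext x
    have := congrArg (fun F : WithConv (H →ₗ[k] B) => T (F x)) hL
    simp only [(ℛ k x).convMul_apply] at this ⊢
    refine this.symm.trans ?_
    simp [hT]
  have e2 : toConv L = toConv j.toLinearMap *
      toConv (LinearMap.mulLeft k a ∘ₗ j.toLinearMap ∘ₗ antipode k) := by
    have : toConv j.toLinearMap *
      toConv (LinearMap.mulLeft k a ∘ₗ j.toLinearMap ∘ₗ antipode k) =
      toConv (LinearMap.mulRight k a ∘ₗ j.toLinearMap) *
        toConv (j.toLinearMap ∘ₗ antipode k) := by
      ext x
      simp only [(ℛ k x).convMul_apply]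
      simp [mul_assoc]
    rw [this, ← hL, mul_assoc, tt_conv_right, mul_one]
  change (toConv (j.toLinearMap ∘ₗ antipode k) *
    toConv (T ∘ₗ LinearMap.mulRight k a ∘ₗ j.toLinearMap)) t = _
  rw [e1, e2, ← mul_assoc, ← mul_assoc, tt_conv_left, one_mul, ttQ_apply,
    (ℛ k t).convMul_apply]
  simp [Finset.mul_sum, mul_assoc]
end Helpers

section Helpers2
open Coalgebra HopfAlgebra WithConv

section smash
variable {k H A B : Type} [Field k]
    [Ring H] [HopfAlgebra k H]
    [Ring A] [Algebra k A] [Module H A] [IsScalarTower k H A]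
    [Ring B] [Algebra k B] (ψ : (A ⊗[k] H) ≃ₗ[k] B)

lemma tt_mul_left
    (hψmul : ∀ (a b : A) (h g : H), ψ (a ⊗ₜ[k] h) * ψ (b ⊗ₜ[k] g) =
      ψ ((TensorProduct.map ((LinearMap.mulLeft k a).comp (actL k H A b))
        (LinearMap.mulRight k g)) (Coalgebra.comul h))) (a b : A) (g : H) :
    ψ (a ⊗ₜ[k] (1 : H)) * ψ (b ⊗ₜ[k] g) = ψ ((a * b) ⊗ₜ[k] g) := by
  rw [hψmul, Bialgebra.comul_one, Algebra.TensorProduct.one_def, TensorProduct.map_tmul]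
  simp [actL]

lemma tt_mul_right
    (hsmul_one : ∀ h : H, h • (1 : A) = (Coalgebra.counit (R := k) h) • (1 : A))
    (hψmul : ∀ (a b : A) (h g : H), ψ (a ⊗ₜ[k] h) * ψ (b ⊗ₜ[k] g) =
      ψ ((TensorProduct.map ((LinearMap.mulLeft k a).comp (actL k H A b))
        (LinearMap.mulRight k g)) (Coalgebra.comul h))) (a : A) (h g : H) :
    ψ (a ⊗ₜ[k] h) * ψ ((1 : A) ⊗ₜ[k] g) = ψ (a ⊗ₜ[k] (h * g)) := by
  rw [hψmul]
  congr 1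
  have e := congrArg (TensorProduct.map (LinearMap.toSpanSingleton k A a)
    (LinearMap.mulRight k g)) (sum_counit_tmul_eq (ℛ k h))
  conv_lhs => rw [← (ℛ k h).eq]
  simp only [map_sum, TensorProduct.map_tmul] at e ⊢
  refine Eq.trans (Finset.sum_congr rfl fun i _ => ?_) (e.trans ?_)
  · simp [actL, hsmul_one]
  · simp

/-- The embedding of `H`. -/
noncomputable def ttj
    (hsmul_one : ∀ h : H, h • (1 : A) = (Coalgebra.counit (R := k) h) • (1 : A))
    (hψone : ψ ((1 : A) ⊗ₜ[k] (1 : H)) = 1)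
    (hψmul : ∀ (a b : A) (h g : H), ψ (a ⊗ₜ[k] h) * ψ (b ⊗ₜ[k] g) =
      ψ ((TensorProduct.map ((LinearMap.mulLeft k a).comp (actL k H A b))
        (LinearMap.mulRight k g)) (Coalgebra.comul h))) : H →ₐ[k] B :=
  AlgHom.ofLinearMap (ψ.toLinearMap ∘ₗ TensorProduct.mk k A H 1) hψone
    (fun x y => (tt_mul_right ψ hsmul_one hψmul 1 x y).symm)

lemma tt_key
    (hsmul_one : ∀ h : H, h • (1 : A) = (Coalgebra.counit (R := k) h) • (1 : A))
    (hψone : ψ ((1 : A) ⊗ₜ[k] (1 : H)) = 1)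
    (hψmul : ∀ (a b : A) (h g : H), ψ (a ⊗ₜ[k] h) * ψ (b ⊗ₜ[k] g) =
      ψ ((TensorProduct.map ((LinearMap.mulLeft k a).comp (actL k H A b))
        (LinearMap.mulRight k g)) (Coalgebra.comul h)))
    (t : H) (htr : ∀ h : H, t * h = (counit (R := k) h) • t)
    (T : B →ₗ[k] B) (hT : ∀ (a : A) y, T (ψ (a ⊗ₜ[k] (1 : H)) * y) = ψ (a ⊗ₜ[k] (1 : H)) * T y)
    (b : B) :
    ttQ (ttj ψ hsmul_one hψone hψmul) t
      (T ∘ₗ LinearMap.mulRight k b ∘ₗ (ttj ψ hsmul_one hψone hψmul).toLinearMap)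
      = b * ttQ (ttj ψ hsmul_one hψone hψmul) t
        (T ∘ₗ (ttj ψ hsmul_one hψone hψmul).toLinearMap) := by
  set j := ttj ψ hsmul_one hψone hψmul with hj
  have hjx : ∀ x, j x = ψ ((1 : A) ⊗ₜ[k] x) := fun x => rfl
  obtain ⟨z, rfl⟩ := ψ.surjective b
  induction z with
  | zero =>
    have : T ∘ₗ LinearMap.mulRight k (ψ 0) ∘ₗ j.toLinearMap = 0 := by ext; simp
    rw [this]; simp
  | add x y hx hy =>
    have : T ∘ₗ LinearMap.mulRight k (ψ (x + y)) ∘ₗ j.toLinearMap =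
      T ∘ₗ LinearMap.mulRight k (ψ x) ∘ₗ j.toLinearMap +
      T ∘ₗ LinearMap.mulRight k (ψ y) ∘ₗ j.toLinearMap := by ext; simp [mul_add]
    rw [this, map_add, hx, hy, map_add, add_mul]
  | tmul a h =>
    have e0 : ψ (a ⊗ₜ[k] h) = ψ (a ⊗ₜ[k] (1 : H)) * j h := by
      rw [hjx, tt_mul_left ψ hψmul, mul_one]
    let L : H →ₗ[k] B := ψ.toLinearMap ∘ₗ (TensorProduct.mk k A H).flip 1 ∘ₗ actL k H A a
    have hL : toConv L * toConv j.toLinearMap =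
        toConv (LinearMap.mulRight k (ψ (a ⊗ₜ[k] (1 : H))) ∘ₗ j.toLinearMap) := by
      ext x
      rw [(ℛ k x).convMul_apply]
      change ∑ i ∈ (ℛ k x).index, ψ (((ℛ k x).left i • a) ⊗ₜ[k] (1 : H)) *
        ψ ((1 : A) ⊗ₜ[k] ((ℛ k x).right i)) = ψ ((1 : A) ⊗ₜ[k] x) * ψ (a ⊗ₜ[k] (1 : H))
      rw [hψmul, ← (ℛ k x).eq]
      simp [tt_mul_left ψ hψmul, actL]
    have e1 := ttQ_comm j t (ψ (a ⊗ₜ[k] (1 : H))) L hL (T ∘ₗ LinearMap.mulRight k (j h))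
      (by
        intro x y
        change T (ψ ((x • a) ⊗ₜ[k] (1 : H)) * y * j h) =
          ψ ((x • a) ⊗ₜ[k] (1 : H)) * T (y * j h)
        rw [mul_assoc, hT])
    have e2 := ttQ_casimir j t htr (T ∘ₗ j.toLinearMap) h
    have e3 : T ∘ₗ LinearMap.mulRight k (ψ (a ⊗ₜ[k] h)) ∘ₗ j.toLinearMap =
        (T ∘ₗ LinearMap.mulRight k (j h)) ∘ₗ
          LinearMap.mulRight k (ψ (a ⊗ₜ[k] (1 : H))) ∘ₗ j.toLinearMap := by
      ext x
      simp [e0, mul_assoc]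
    have e4 : (T ∘ₗ LinearMap.mulRight k (j h)) ∘ₗ j.toLinearMap =
        (T ∘ₗ j.toLinearMap) ∘ₗ LinearMap.mulRight k h := by
      ext x
      simp
    rw [e3, e1, e4, e2, e0, mul_assoc]

/-- coordinate functional -/
noncomputable def ttphi (f : H →ₗ[k] k) : B →ₗ[k] A :=
  (TensorProduct.rid k A).toLinearMap ∘ₗ (LinearMap.lTensor A f) ∘ₗ ψ.symm.toLinearMap

lemma ttphi_mul
    (hψmul : ∀ (a b : A) (h g : H), ψ (a ⊗ₜ[k] h) * ψ (b ⊗ₜ[k] g) =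
      ψ ((TensorProduct.map ((LinearMap.mulLeft k a).comp (actL k H A b))
        (LinearMap.mulRight k g)) (Coalgebra.comul h)))
    (f : H →ₗ[k] k) (a : A) (y : B) :
    ttphi ψ f (ψ (a ⊗ₜ[k] (1 : H)) * y) = a * ttphi ψ f y := by
  obtain ⟨z, rfl⟩ := ψ.surjective y
  induction z with
  | zero => simp
  | add x y hx hy => simp only [map_add, mul_add, hx, hy]
  | tmul b h => rw [tt_mul_left ψ hψmul]; simp [ttphi]

lemma ttphi_sum {ι : Type} [Fintype ι] (bas : Module.Basis ι k H) (y : B) :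
    ∑ l, ψ (ttphi ψ (bas.coord l) y ⊗ₜ[k] bas l) = y := by
  obtain ⟨z, rfl⟩ := ψ.surjective y
  induction z with
  | zero => simp
  | add x y hx hy => simp only [map_add, TensorProduct.add_tmul, Finset.sum_add_distrib, hx, hy]
  | tmul b h =>
    have : ∀ l, ttphi ψ (bas.coord l) (ψ (b ⊗ₜ[k] h)) ⊗ₜ[k] bas l =
        b ⊗ₜ[k] (bas.coord l h • bas l) := by
      intro l
      simp [ttphi, TensorProduct.smul_tmul]
    simp only [this]
    rw [← map_sum, ← TensorProduct.tmul_sum]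
    simp [bas.sum_repr]

/-- the vector attached to `f` and `b` -/
noncomputable def ttv (j : H →ₐ[k] B) (f : H →ₗ[k] k) (b : B) : H →ₗ[k] Aᵐᵒᵖ :=
  (MulOpposite.opLinearEquiv k).toLinearMap ∘ₗ ttphi ψ f ∘ₗ LinearMap.mulRight k b ∘ₗ
    j.toLinearMap

/-- the evaluation `w ↦ Σ S(t₁) w(t₂) x` -/
noncomputable def ttP (j : H →ₐ[k] B) (t x : H) (w : H →ₗ[k] Aᵐᵒᵖ) : B :=
  ttQ j t (ψ.toLinearMap ∘ₗ (TensorProduct.mk k A H).flip x ∘ₗ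
    (MulOpposite.opLinearEquiv k).symm.toLinearMap ∘ₗ w)

lemma ttP_add (j : H →ₐ[k] B) (t x : H) (w w' : H →ₗ[k] Aᵐᵒᵖ) :
    ttP ψ j t x (w + w') = ttP ψ j t x w + ttP ψ j t x w' := by
  simp [ttP, LinearMap.comp_add]

lemma ttP_zero (j : H →ₐ[k] B) (t x : H) : ttP ψ j t x 0 = 0 := by
  simp [ttP]

lemma tt_noeth [FiniteDimensional k H] [IsNoetherianRing Aᵐᵒᵖ]
    (hsmul_one : ∀ h : H, h • (1 : A) = (Coalgebra.counit (R := k) h) • (1 : A))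
    (hψone : ψ ((1 : A) ⊗ₜ[k] (1 : H)) = 1)
    (hψmul : ∀ (a b : A) (h g : H), ψ (a ⊗ₜ[k] h) * ψ (b ⊗ₜ[k] g) =
      ψ ((TensorProduct.map ((LinearMap.mulLeft k a).comp (actL k H A b))
        (LinearMap.mulRight k g)) (Coalgebra.comul h)))
    (t : H) (ht1 : counit (R := k) t = 1)
    (htr : ∀ h : H, t * h = (counit (R := k) h) • t) : IsNoetherianRing Bᵐᵒᵖ := by
  set j := ttj ψ hsmul_one hψone hψmul with hj
  let bas := Module.finBasis k H
  have : IsNoetherian Aᵐᵒᵖ (H →ₗ[k] Aᵐᵒᵖ) := by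
    let F : (H →ₗ[k] Aᵐᵒᵖ) →ₗ[Aᵐᵒᵖ] (Fin (Module.finrank k H) → Aᵐᵒᵖ) :=
      { toFun := fun w i => w (bas i)
        map_add' := fun _ _ => rfl
        map_smul' := fun _ _ => rfl }
    exact isNoetherian_of_injective F (fun w w' h => bas.ext fun i => congrFun h i)
  let bar : Ideal Bᵐᵒᵖ → Submodule Aᵐᵒᵖ (H →ₗ[k] Aᵐᵒᵖ) := fun I =>
    Submodule.span Aᵐᵒᵖ {w | ∃ f b, op b ∈ I ∧ w = ttv ψ j f b}
  have hP : ∀ I x w, w ∈ bar I → ∀ a : Aᵐᵒᵖ, op (ttP ψ j t x (a • w)) ∈ I := by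
    intro I x w hw
    induction hw using Submodule.span_induction with
    | mem w hw =>
      obtain ⟨f, b, hb, rfl⟩ := hw
      intro a
      let T : B →ₗ[k] B := ψ.toLinearMap ∘ₗ (TensorProduct.mk k A H).flip x ∘ₗ
        LinearMap.mulRight k a.unop ∘ₗ ttphi ψ f
      have hT : ∀ (a' : A) y, T (ψ (a' ⊗ₜ[k] (1 : H)) * y) =
          ψ (a' ⊗ₜ[k] (1 : H)) * T y := by
        intro a' y
        simp [T, ttphi_mul ψ hψmul, tt_mul_left ψ hψmul, mul_assoc]
      have e := tt_key ψ hsmul_one hψone hψmul t htr T hT b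
      have e' : ttP ψ j t x (a • ttv ψ j f b) = b * ttQ j t (T ∘ₗ j.toLinearMap) := e
      rw [e', op_mul]
      exact I.mul_mem_left _ hb
    | zero => intro a; simp [ttP_zero]
    | add w w' _ _ h h' =>
      intro a; rw [smul_add, ttP_add, op_add]; exact I.add_mem (h a) (h' a)
    | smul c w _ h => intro a; rw [← mul_smul]; exact h _
  have hrec : ∀ b, ∑ l, ttP ψ j t (bas l) (ttv ψ j (bas.coord l) b) = b := by
    intro b
    have : ∑ l, ttP ψ j t (bas l) (ttv ψ j (bas.coord l) b) =
        ttQ j t (LinearMap.mulRight k b ∘ₗ j.toLinearMap) := by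
      simp only [ttP]
      rw [← map_sum]
      congr 1
      ext x
      simp only [LinearMap.sum_apply]
      exact ttphi_sum ψ bas (j x * b)
    rw [this, ttQ_mulRight, ttQ_j j t ht1, one_mul]
  have hle : ∀ I J, bar I ≤ bar J → I ≤ J := by
    intro I J h c hc
    have hc' : op (unop c) ∈ I := hc
    have : op (unop c) ∈ J := by
      rw [← hrec (unop c), Finset.op_sum]
      refine J.sum_mem fun l _ => ?_
      have := hP J (bas l) (ttv ψ j (bas.coord l) (unop c))
        (h (Submodule.subset_span ⟨_, _, hc', rfl⟩)) 1
      rwa [one_smul] at this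
    exact this
  have hmono : ∀ I J, I ≤ J → bar I ≤ bar J := by
    intro I J h
    refine Submodule.span_mono ?_
    rintro _ ⟨f, b, hb, rfl⟩
    exact ⟨f, b, h hb, rfl⟩
  have hs : StrictMono bar := fun I J h =>
    lt_of_le_of_ne (hmono _ _ h.le) (fun e => h.not_ge (hle _ _ e.ge))
  rw [IsNoetherianRing, isNoetherian_iff']
  exact hs.wellFoundedGT

/-- `a ↦ m (a#t)`, linear in both. -/
noncomputable def tttau (t : H) {M : Type} [AddCommGroup M] [Module Bᵐᵒᵖ M] [Module k M]
    [IsScalarTower k Bᵐᵒᵖ M] (m : M) : A →ₗ[k] M where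
  toFun a := op (ψ (a ⊗ₜ[k] t)) • m
  map_add' a a' := by rw [TensorProduct.add_tmul, map_add, op_add, add_smul]
  map_smul' c a := by
    rw [← TensorProduct.smul_tmul', map_smul, op_smul, smul_assoc]; rfl

lemma tt_iff (t : H) {M : Type} [AddCommGroup M] [Module Bᵐᵒᵖ M] [Module k M]
    [IsScalarTower k Bᵐᵒᵖ M] :
    IsTTorsion k H A B ψ t M ↔ ∀ m : M, (LinearMap.range (tttau ψ t m)).FG := by
  have : ∀ m : M, Submodule.span k {x | ∃ a : A, x = op (ψ (a ⊗ₜ[k] t)) • m} =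
      LinearMap.range (tttau ψ t m) := by
    intro m
    rw [← Submodule.span_eq (LinearMap.range (tttau ψ t m))]
    congr 1
    ext x
    exact exists_congr fun a => eq_comm
  unfold IsTTorsion
  refine forall_congr' fun m => ?_
  rw [this, FiniteDimensional, Module.Finite.iff_fg]

lemma tt_range_map (t : H) {M N : Type} [AddCommGroup M] [Module Bᵐᵒᵖ M] [Module k M]
    [IsScalarTower k Bᵐᵒᵖ M] [AddCommGroup N] [Module Bᵐᵒᵖ N] [Module k N]
    [IsScalarTower k Bᵐᵒᵖ N] (f : M →ₗ[Bᵐᵒᵖ] N) (m : M) :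
    LinearMap.range (tttau ψ t (f m)) =
      (LinearMap.range (tttau ψ t m)).map (f.restrictScalars k) := by
  rw [← LinearMap.range_comp]
  congr 1
  ext a
  simp [tttau]

end smash
end Helpers2

/-- Let `H` be a finite-dimensional semisimple Hopf algebra over `k`, `A` a noetherian left
`H`-module algebra, `B = A#H` the smash product and `t` the idempotent integral of `H`.
Then the class of `t`-torsion right `B`-modules is closed under submodules, quotients,
extensions and arbitrary direct sums. -/
theorem tTorsion_localizing
    (k H A B : Type) [Field k] [CharZero k]
    [Ring H] [HopfAlgebra k H] [FiniteDimensional k H] [IsSemisimpleRing H]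
    [Ring A] [Algebra k A] [Module H A] [IsScalarTower k H A]
    [IsNoetherianRing A] [IsNoetherianRing Aᵐᵒᵖ]
    (hsmul_mul : ∀ (h : H) (a b : A), h • (a * b) =
      (LinearMap.mul' k A) ((TensorProduct.map (actL k H A a) (actL k H A b))
        (Coalgebra.comul h)))
    (hsmul_one : ∀ h : H, h • (1 : A) = (Coalgebra.counit (R := k) h) • (1 : A))
    [Ring B] [Algebra k B] (ψ : (A ⊗[k] H) ≃ₗ[k] B)
    (hψone : ψ ((1 : A) ⊗ₜ[k] (1 : H)) = 1)
    (hψmul : ∀ (a b : A) (h g : H), ψ (a ⊗ₜ[k] h) * ψ (b ⊗ₜ[k] g) =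
      ψ ((TensorProduct.map ((LinearMap.mulLeft k a).comp (actL k H A b))
        (LinearMap.mulRight k g)) (Coalgebra.comul h)))
    (t : H) (htcounit : Coalgebra.counit (R := k) t = 1)
    (htint : ∀ h : H, h * t = (Coalgebra.counit (R := k) h) • t) :
    (∀ (M : Type) [AddCommGroup M] [Module Bᵐᵒᵖ M] [Module k M] [IsScalarTower k Bᵐᵒᵖ M]
        (N : Submodule Bᵐᵒᵖ M),
        IsTTorsion k H A B ψ t M → IsTTorsion k H A B ψ t N) ∧
    (∀ (M : Type) [AddCommGroup M] [Module Bᵐᵒᵖ M] [Module k M] [IsScalarTower k Bᵐᵒᵖ M]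
        (N : Submodule Bᵐᵒᵖ M),
        IsTTorsion k H A B ψ t M → IsTTorsion k H A B ψ t (M ⧸ N)) ∧
    (∀ (M : Type) [AddCommGroup M] [Module Bᵐᵒᵖ M] [Module k M] [IsScalarTower k Bᵐᵒᵖ M]
        (N : Submodule Bᵐᵒᵖ M),
        IsTTorsion k H A B ψ t N → IsTTorsion k H A B ψ t (M ⧸ N) →
          IsTTorsion k H A B ψ t M) ∧
    (∀ (ι : Type) [DecidableEq ι] (Mi : ι → Type) [∀ i, AddCommGroup (Mi i)]
        [∀ i, Module Bᵐᵒᵖ (Mi i)] [∀ i, Module k (Mi i)]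
        [∀ i, IsScalarTower k Bᵐᵒᵖ (Mi i)],
        (∀ i, IsTTorsion k H A B ψ t (Mi i)) →
          IsTTorsion k H A B ψ t (DirectSum ι (fun i => Mi i))) := by
  have htr : ∀ h : H, t * h = (Coalgebra.counit (R := k) h) • t := fun h =>
    tt_right_integral k H t htint h htcounit
  have hB : IsNoetherianRing Bᵐᵒᵖ := tt_noeth ψ hsmul_one hψone hψmul t htcounit htr
  refine ⟨?_, ?_, ?_, ?_⟩
  · intro M _ _ _ _ N hM
    rw [tt_iff] at hM ⊢
    intro n
    have h := hM (N.subtype n)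
    rw [tt_range_map] at h
    exact Submodule.fg_of_fg_map_injective _ Subtype.val_injective h
  · intro M _ _ _ _ N hM
    rw [tt_iff] at hM ⊢
    intro n
    obtain ⟨m, rfl⟩ := N.mkQ_surjective n
    rw [tt_range_map]
    exact (hM m).map _
  · intro M _ _ _ _ N hN hQ
    rw [tt_iff] at hN hQ ⊢
    intro m
    refine Submodule.fg_of_fg_map_of_fg_inf_ker (N.mkQ.restrictScalars k) ?_ ?_
    · rw [← tt_range_map]; exact hQ _
    · have : IsNoetherian Bᵐᵒᵖ (Submodule.span Bᵐᵒᵖ {m}) :=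
        isNoetherian_span_of_finite _ (Set.finite_singleton m)
      have hfg : (Submodule.span Bᵐᵒᵖ {m} ⊓ N).FG :=
        (isNoetherian_submodule.mp this) _ inf_le_left
      obtain ⟨S, hS⟩ := hfg
      let U : Submodule k M := ⨆ s ∈ S, LinearMap.range (tttau ψ t s)
      have hUfg : U.FG := by
        refine Submodule.fg_biSup S _ fun s hs => ?_
        have hsN : s ∈ N := by
          have : s ∈ Submodule.span Bᵐᵒᵖ (S : Set M) := Submodule.subset_span hs
          rw [hS] at this
          exact this.2
        have := tt_range_map ψ t N.subtype ⟨s, hsN⟩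
        rw [Submodule.subtype_apply] at this
        rw [this]
        exact (hN _).map _
      have hbe : ∀ b : B, ∃ a : A, b * ψ ((1 : A) ⊗ₜ[k] t) = ψ (a ⊗ₜ[k] t) := by
        intro b
        obtain ⟨z, rfl⟩ := ψ.surjective b
        induction z with
        | zero => exact ⟨0, by simp⟩
        | add x y hx hy =>
          obtain ⟨a, ha⟩ := hx
          obtain ⟨a', ha'⟩ := hy
          exact ⟨a + a', by rw [map_add, add_mul, ha, ha', TensorProduct.add_tmul, map_add]⟩
        | tmul a h =>
          refine ⟨Coalgebra.counit (R := k) h • a, ?_⟩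
          rw [tt_mul_right ψ hsmul_one hψmul, htint, TensorProduct.smul_tmul]
      have hU : ∀ y ∈ Submodule.span Bᵐᵒᵖ (S : Set M), ∀ b : B,
          op (b * ψ ((1 : A) ⊗ₜ[k] t)) • y ∈ U := by
        intro y hy
        induction hy using Submodule.span_induction with
        | mem s hs =>
          intro b
          obtain ⟨a, ha⟩ := hbe b
          rw [ha]
          exact (le_biSup (fun s => LinearMap.range (tttau ψ t s)) hs) ⟨a, rfl⟩
        | zero => intro b; rw [smul_zero]; exact U.zero_mem
        | add x y _ _ hx hy => intro b; rw [smul_add]; exact U.add_mem (hx b) (hy b)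
        | smul c x _ hx =>
          intro b
          have := hx (unop c * b)
          rwa [mul_assoc, op_mul, op_unop, mul_smul] at this
      have : IsNoetherian k U := by
        have : Module.Finite k U := Module.Finite.iff_fg.mpr hUfg
        infer_instance
      refine (isNoetherian_submodule.mp this) _ ?_
      rintro x ⟨⟨a, rfl⟩, hx⟩
      have hxN : tttau ψ t m a ∈ N := by
        have hx' : N.mkQ (tttau ψ t m a) = 0 := hx
        rwa [Submodule.mkQ_apply, Submodule.Quotient.mk_eq_zero] at hx'
      have hxm : tttau ψ t m a ∈ Submodule.span Bᵐᵒᵖ {m} :=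
        Submodule.smul_mem _ _ (Submodule.mem_span_singleton_self m)
      have hxS : tttau ψ t m a ∈ Submodule.span Bᵐᵒᵖ (S : Set M) := by
        rw [hS]; exact ⟨hxm, hxN⟩
      have h1 := hU _ hxS 1
      have h2 : op (1 * ψ ((1 : A) ⊗ₜ[k] t)) • tttau ψ t m a = tttau ψ t m a := by
        change op (1 * ψ ((1 : A) ⊗ₜ[k] t)) • op (ψ (a ⊗ₜ[k] t)) • m = op (ψ (a ⊗ₜ[k] t)) • m
        rw [← mul_smul, ← op_mul, one_mul, tt_mul_right ψ hsmul_one hψmul, htint, htcounit,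
          one_smul]
      rwa [h2] at h1
  · intro ι _ Mi _ _ _ _ hM
    rw [tt_iff]
    intro m
    induction m using DirectSum.induction_on with
    | zero =>
      have : tttau ψ t (0 : DirectSum ι fun i => Mi i) = 0 := by ext a; simp [tttau]
      rw [this, LinearMap.range_zero]
      exact Submodule.fg_bot
    | of i x =>
      have := tt_range_map ψ t (DirectSum.lof Bᵐᵒᵖ ι Mi i) x
      rw [DirectSum.lof_eq_of] at this
      rw [this]
      exact (((tt_iff ψ t).mp (hM i)) x).map _
    | add x y hx hy =>
      have hxy := hx.sup hy
      have : IsNoetherian k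
          ↥(LinearMap.range (tttau ψ t x) ⊔ LinearMap.range (tttau ψ t y)) := by
        have := Module.Finite.iff_fg.mpr hxy
        infer_instance
      refine (isNoetherian_submodule.mp this) _ ?_
      rintro _ ⟨a, rfl⟩
      have e : tttau ψ t (x + y) a = tttau ψ t x a + tttau ψ t y a := smul_add _ _ _
      rw [e]
      exact Submodule.add_mem_sup ⟨a, rfl⟩ ⟨a, rfl⟩
end

section
/- Let H be a finite-dimensional semisimple Hopf algebra, A a noetherian left H-module algebra, R = A^H, B = A#H, and t the idempotent integral of H. For a right B-module M, M is t-torsion (i.e., m(A#t) is finite dimensional for all m ∈ M) if and only if Mt is a torsion right R-module (i.e., (mt)R is finite dimensional for all m ∈ M). -/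
open TensorProduct MulOpposite

section Aux
variable {k H : Type} [Field k] [Ring H] [HopfAlgebra k H]

/-- `(f ⊗ id)` followed by the identification `k ⊗ H = H`. -/
noncomputable def slice (f : H →ₗ[k] k) : H ⊗[k] H →ₗ[k] H :=
  (TensorProduct.lid k H).toLinearMap ∘ₗ TensorProduct.map f LinearMap.id

theorem slice_tmul (f : H →ₗ[k] k) (x y : H) : slice f (x ⊗ₜ[k] y) = f x • y := by
  simp [slice]

theorem slice_mul (f : H →ₗ[k] k) (x y : H) (Y : H ⊗[k] H) :
    slice f ((x ⊗ₜ[k] y) * Y) = y * slice (f ∘ₗ LinearMap.mulLeft k x) Y := by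
  induction Y with
  | zero => simp
  | tmul a b => simp [slice_tmul]
  | add a b ha hb => simp only [mul_add, map_add, ha, hb]

/-- The comultiplication of a left integral. -/
theorem integral_comul (t : H)
    (htint : ∀ h : H, h * t = (Coalgebra.counit (R := k) h) • t) (h : H) :
    ((1 : H) ⊗ₜ[k] h) * Coalgebra.comul (R := k) t =
      ((HopfAlgebra.antipode k h) ⊗ₜ[k] (1 : H)) * Coalgebra.comul (R := k) t := by
  let D : H ⊗[k] H := Coalgebra.comul (R := k) t
  let K : (H ⊗[k] H) ⊗[k] H →ₗ[k] H ⊗[k] H :=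
    LinearMap.mulRight k D ∘ₗ
      TensorProduct.map (LinearMap.mul' k H ∘ₗ (HopfAlgebra.antipode k).rTensor H) LinearMap.id
  have hK : ∀ (x : H) (Y : H ⊗[k] H), K ((TensorProduct.assoc k H H H).symm (x ⊗ₜ Y)) =
      ((HopfAlgebra.antipode k x) ⊗ₜ[k] (1 : H)) * (Y * D) := by
    intro x Y
    induction Y with
    | zero => simp
    | tmul a b => simp [K, ← mul_assoc]
    | add a b ha hb => simp only [TensorProduct.tmul_add, map_add, ha, hb, add_mul, mul_add]
  have h1 : ∀ X : H ⊗[k] H,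
      K ((TensorProduct.assoc k H H H).symm ((Coalgebra.comul (R := k)).lTensor H X)) =
      ((HopfAlgebra.antipode k (TensorProduct.rid k H
        ((Coalgebra.counit (R := k)).lTensor H X))) ⊗ₜ[k] (1 : H)) * D := by
    intro X
    induction X with
    | zero => simp
    | tmul a b =>
      rw [LinearMap.lTensor_tmul, hK, ← Bialgebra.comul_mul, htint]
      simp only [D, map_smul, mul_smul_comm, LinearMap.lTensor_tmul, TensorProduct.rid_tmul,
        ← TensorProduct.smul_tmul', smul_mul_assoc]
    | add a b ha hb => simp only [map_add, ha, hb, TensorProduct.add_tmul, add_mul]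
  have h2 : ∀ X : H ⊗[k] H, K ((Coalgebra.comul (R := k)).rTensor H X) =
      ((Coalgebra.counit (R := k)).rTensor H X |>
        TensorProduct.map (Algebra.linearMap k H) LinearMap.id) * D := by
    intro X
    induction X with
    | zero => simp
    | tmul a b =>
      simp [K]
    | add a b ha hb => simp only [map_add, ha, hb, add_mul]
  have e1 := h1 (Coalgebra.comul (R := k) h)
  have e2 := h2 (Coalgebra.comul (R := k) h)
  rw [← Coalgebra.coassoc_apply, LinearEquiv.symm_apply_apply, e2] at e1
  simpa [D] using e1

theorem exists_functional [FiniteDimensional k H] (t : H)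
    (htcounit : Coalgebra.counit (R := k) t = 1)
    (htint : ∀ h : H, h * t = (Coalgebra.counit (R := k) h) • t) :
    ∃ f : H →ₗ[k] k, slice f (Coalgebra.comul (R := k) t) = 1 := by
  let b := Module.finBasis k H
  let D : H ⊗[k] H := Coalgebra.comul (R := k) t
  have hD : ∀ X : H ⊗[k] H, X = ∑ i, b i ⊗ₜ[k] slice (b.coord i) X := by
    intro X
    induction X with
    | zero => simp
    | tmul x y =>
      simp only [slice_tmul, ← TensorProduct.smul_tmul]
      rw [← TensorProduct.sum_tmul]
      congr 1
      exact (b.sum_repr x).symm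
    | add x y hx hy =>
      simp only [map_add, TensorProduct.tmul_add, Finset.sum_add_distrib]
      rw [← hx, ← hy]
  have hs : ∀ (f g : H →ₗ[k] k) (X : H ⊗[k] H), slice (f + g) X = slice f X + slice g X := by
    intro f g X
    simp [slice, TensorProduct.map_add_left]
  let V : Submodule k H := 
    { carrier := {x | ∃ f : H →ₗ[k] k, slice f D = x}
      add_mem' := by
        rintro _ _ ⟨f, rfl⟩ ⟨g, rfl⟩
        exact ⟨f + g, hs f g D⟩
      zero_mem' := ⟨0, by simp [slice]⟩
      smul_mem' := by
        rintro c _ ⟨f, rfl⟩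
        exact ⟨c • f, by simp [slice, TensorProduct.map_smul_left]⟩ }
  have hV : ∀ (h : H) (f : H →ₗ[k] k), h * slice f D ∈ V := by
    intro h f
    refine ⟨f ∘ₗ LinearMap.mulLeft k (HopfAlgebra.antipode k h), ?_⟩
    have e := congrArg (slice f) (integral_comul t htint h)
    rw [slice_mul, slice_mul] at e
    simpa [D] using e.symm
  have h1 := HopfAlgebra.mul_antipode_rTensor_comul_apply (R := k) t
  rw [htcounit, map_one] at h1
  change (1 : H) ∈ V
  rw [← h1, hD (Coalgebra.comul (R := k) t)]
  simp only [map_sum, LinearMap.rTensor_tmul, LinearMap.mul'_apply]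
  exact Submodule.sum_mem _ fun i _ => hV _ _

/-- A left inverse of the antipode-like map: `h₂ Sbar(h₁) = ε(h)`. -/
theorem exists_skew_antipode [FiniteDimensional k H] (t : H)
    (htcounit : Coalgebra.counit (R := k) t = 1)
    (htint : ∀ h : H, h * t = (Coalgebra.counit (R := k) h) • t) :
    ∃ Q : H ⊗[k] H →ₗ[k] H, ∃ Sbar : H → H, (∀ x y, Q (x ⊗ₜ y) = y * Sbar x) ∧
      ∀ h : H, Q (Coalgebra.comul (R := k) h) = (Coalgebra.counit (R := k) h) • 1 := by
  obtain ⟨f, hf⟩ := exists_functional t htcounit htint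
  refine ⟨slice f ∘ₗ LinearMap.mulRight k (Coalgebra.comul (R := k) t),
    fun x => slice (f ∘ₗ LinearMap.mulLeft k x) (Coalgebra.comul (R := k) t), ?_, ?_⟩
  · intro x y
    simp [slice_mul]
  · intro h
    simp only [LinearMap.comp_apply, LinearMap.mulRight_apply]
    rw [← Bialgebra.comul_mul, htint, map_smul, map_smul, hf]

end Aux

/-- Let `H` be a finite-dimensional semisimple Hopf algebra, `A` a noetherian left
`H`-module algebra, `R = A^H` the invariant subalgebra, `B = A#H` the smash product and
`t` the idempotent integral of `H`.  A right `B`-module `M` is `t`-torsion (i.e. `m(A#t)`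
is finite-dimensional for all `m ∈ M`) if and only if `Mt` is a torsion right `R`-module
(i.e. `(mt)R` is finite-dimensional for all `m ∈ M`). -/
theorem tTorsion_iff_mt_torsion
    (k H A B : Type) [Field k] [CharZero k]
    [Ring H] [HopfAlgebra k H] [FiniteDimensional k H] [IsSemisimpleRing H]
    [Ring A] [Algebra k A] [Module H A] [IsScalarTower k H A]
    [IsNoetherianRing A] [IsNoetherianRing Aᵐᵒᵖ]
    (hsmul_mul : ∀ (h : H) (a b : A), h • (a * b) =
      (LinearMap.mul' k A) ((TensorProduct.map (actL k H A a) (actL k H A b))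
        (Coalgebra.comul h)))
    (hsmul_one : ∀ h : H, h • (1 : A) = (Coalgebra.counit (R := k) h) • (1 : A))
    [Ring B] [Algebra k B] (ψ : (A ⊗[k] H) ≃ₗ[k] B)
    (hψone : ψ ((1 : A) ⊗ₜ[k] (1 : H)) = 1)
    (hψmul : ∀ (a b : A) (h g : H), ψ (a ⊗ₜ[k] h) * ψ (b ⊗ₜ[k] g) =
      ψ ((TensorProduct.map ((LinearMap.mulLeft k a).comp (actL k H A b))
        (LinearMap.mulRight k g)) (Coalgebra.comul h)))
    (t : H) (htcounit : Coalgebra.counit (R := k) t = 1)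
    (htint : ∀ h : H, h * t = (Coalgebra.counit (R := k) h) • t)
    (M : Type) [AddCommGroup M] [Module Bᵐᵒᵖ M] [Module k M] [IsScalarTower k Bᵐᵒᵖ M] :
    IsTTorsion k H A B ψ t M ↔
      ∀ m : M, FiniteDimensional k
        (Submodule.span k {x | ∃ r : A,
          (∀ h : H, h • r = (Coalgebra.counit (R := k) h) • r) ∧
          x = op (ψ (r ⊗ₜ[k] (1 : H))) • (op (ψ ((1 : A) ⊗ₜ[k] t)) • m)}) := by
  classical
  obtain ⟨Q, Sbar, hQ, hQe⟩ := exists_skew_antipode (k := k) t htcounit htint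
  -- basic multiplication rules in the smash product
  have hA1 : ∀ (a b : A) (g : H), ψ (a ⊗ₜ[k] (1 : H)) * ψ (b ⊗ₜ[k] g) = ψ ((a * b) ⊗ₜ[k] g) := by
    intro a b g
    rw [hψmul, Bialgebra.comul_one]
    simp [Algebra.TensorProduct.one_def, actL]
  have hcl : ∀ X : H ⊗[k] H, ∀ (a c : A) (F : H →ₗ[k] H),
      (∀ h : H, h • c = (Coalgebra.counit (R := k) h) • c) →
      TensorProduct.map ((LinearMap.mulLeft k a).comp (actL k H A c)) F X =
        (a * c) ⊗ₜ[k] F (TensorProduct.lid k H ((Coalgebra.counit (R := k)).rTensor H X)) := by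
    intro X a c F hc
    induction X with
    | zero => simp
    | tmul x y => simp [actL, hc, TensorProduct.smul_tmul]
    | add x y hx hy => simp only [map_add, hx, hy, TensorProduct.tmul_add]
  have hinv : ∀ (a c : A) (h g : H), (∀ h : H, h • c = (Coalgebra.counit (R := k) h) • c) →
      ψ (a ⊗ₜ[k] h) * ψ (c ⊗ₜ[k] g) = ψ ((a * c) ⊗ₜ[k] (h * g)) := by
    intro a c h g hc
    rw [hψmul, hcl _ _ _ _ hc]
    simp
  have hcr : ∀ X : H ⊗[k] H, ∀ (a c : A),
      TensorProduct.map ((LinearMap.mulLeft k a).comp (actL k H A c)) (LinearMap.mulRight k t) X =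
        (a * ((TensorProduct.rid k H ((Coalgebra.counit (R := k)).lTensor H X)) • c)) ⊗ₜ[k] t := by
    intro X a c
    induction X with
    | zero => simp
    | tmul x y => simp [actL, htint, TensorProduct.smul_tmul']
    | add x y hx hy => simp only [map_add, hx, hy, TensorProduct.add_tmul, add_smul, mul_add]
  have hct : ∀ (a c : A) (h : H), ψ (a ⊗ₜ[k] h) * ψ (c ⊗ₜ[k] t) = ψ ((a * (h • c)) ⊗ₜ[k] t) := by
    intro a c h
    rw [hψmul, hcr]
    simp
  have htt : t * t = t := by rw [htint, htcounit, one_smul]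
  have htR : ∀ (c : A) (h : H), h • (t • c) = (Coalgebra.counit (R := k) h) • (t • c) := by
    intro c h
    rw [← mul_smul, htint, smul_assoc]
  -- the embedding of `A`
  let φ : A →+* B :=
    { toFun := fun a => ψ (a ⊗ₜ[k] (1 : H))
      map_one' := hψone
      map_mul' := fun a b => (hA1 a b 1).symm
      map_zero' := by simp
      map_add' := fun a b => by simp [TensorProduct.add_tmul] }
  letI : Module Aᵐᵒᵖ B := Module.compHom B φ.op
  have hsm : ∀ (a : A) (x : B), op a • x = x * ψ (a ⊗ₜ[k] (1 : H)) := fun a x => rfl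
  let b := Module.finBasis k H
  let N : Submodule Aᵐᵒᵖ B := Submodule.span Aᵐᵒᵖ (Set.range fun i => ψ ((1 : A) ⊗ₜ[k] b i))
  have hks : ∀ (c : k) (x : B), c • x = op (algebraMap k A c) • x := by
    intro c x
    rw [hsm, Algebra.algebraMap_eq_smul_one, ← TensorProduct.smul_tmul', map_smul, hψone]
    simp
  have hN1 : ∀ h : H, ψ ((1 : A) ⊗ₜ[k] h) ∈ N := by
    intro h
    rw [← b.sum_repr h, TensorProduct.tmul_sum, map_sum]
    refine Submodule.sum_mem _ fun i _ => ?_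
    rw [TensorProduct.tmul_smul, map_smul, hks]
    exact N.smul_mem _ (Submodule.subset_span ⟨i, rfl⟩)
  have hN2 : ∀ (h : H) (a : A), ψ ((1 : A) ⊗ₜ[k] h) * ψ (a ⊗ₜ[k] (1 : H)) ∈ N := by
    intro h a
    rw [← hsm]
    exact N.smul_mem _ (hN1 h)
  have hN3 : ∀ (a : A) (h : H), ψ (a ⊗ₜ[k] h) ∈ N := by
    intro a h
    let G : (H ⊗[k] H) ⊗[k] H →ₗ[k] A ⊗[k] H :=
      TensorProduct.map (actL k H A a ∘ₗ Q) LinearMap.id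
    have hG : ∀ (x : H) (Y : H ⊗[k] H), G ((TensorProduct.assoc k H H H).symm (x ⊗ₜ Y)) =
        TensorProduct.map ((LinearMap.mulLeft k 1).comp (actL k H A (Sbar x • a)))
          (LinearMap.mulRight k 1) Y := by
      intro x Y
      induction Y with
      | zero => simp
      | tmul y z => simp [G, hQ, actL, mul_smul]
      | add y z hy hz => simp only [TensorProduct.tmul_add, map_add, hy, hz]
    have h1 : ∀ X : H ⊗[k] H,
        ψ (G ((TensorProduct.assoc k H H H).symm ((Coalgebra.comul (R := k)).lTensor H X))) ∈ N := by
      intro X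
      induction X with
      | zero => simp
      | tmul x y =>
        rw [LinearMap.lTensor_tmul, hG, ← hψmul]
        exact hN2 _ _
      | add x y hx hy =>
        simp only [map_add]
        exact N.add_mem hx hy
    have h2 : ∀ X : H ⊗[k] H, G ((Coalgebra.comul (R := k)).rTensor H X) =
        a ⊗ₜ[k] (TensorProduct.lid k H ((Coalgebra.counit (R := k)).rTensor H X)) := by
      intro X
      induction X with
      | zero => simp
      | tmul x y => simp [G, hQe, actL, TensorProduct.smul_tmul]
      | add x y hx hy => simp only [map_add, hx, hy, TensorProduct.tmul_add]
    have e := h1 (Coalgebra.comul (R := k) h)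
    rw [← Coalgebra.coassoc_apply, LinearEquiv.symm_apply_apply, h2] at e
    simpa using e
  have hNtop : N = ⊤ := by
    rw [eq_top_iff]
    intro x _
    obtain ⟨y, rfl⟩ := ψ.surjective x
    induction y with
    | zero => simp
    | tmul a h => exact hN3 a h
    | add x y hx hy =>
      rw [map_add]
      exact N.add_mem (hx trivial) (hy trivial)
  haveI : Module.Finite Aᵐᵒᵖ B := ⟨by
    rw [← hNtop]
    exact Submodule.fg_span (Set.finite_range _)⟩
  haveI : IsNoetherian Aᵐᵒᵖ B := isNoetherian_of_isNoetherianRing_of_finite _ _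
  obtain ⟨s, hs, hspan⟩ := (Submodule.fg_span_iff_fg_span_finset_subset
    (R := Aᵐᵒᵖ) (Set.range fun a : A => ψ (a ⊗ₜ[k] t))).1 (IsNoetherian.noetherian _)
  constructor
  · intro hM m
    haveI := hM m
    refine Submodule.finiteDimensional_of_le (Submodule.span_mono ?_)
      (S₂ := Submodule.span k {x | ∃ a : A, x = op (ψ (a ⊗ₜ[k] t)) • m})
    rintro x ⟨r, hr, rfl⟩
    refine ⟨r, ?_⟩
    rw [smul_smul, ← op_mul, hinv _ _ _ _ hr]
    simp
  · intro hM m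
    let W : M → Submodule k M := fun m => Submodule.span k {x | ∃ r : A,
          (∀ h : H, h • r = (Coalgebra.counit (R := k) h) • r) ∧
          x = op (ψ (r ⊗ₜ[k] (1 : H))) • (op (ψ ((1 : A) ⊗ₜ[k] t)) • m)}
    haveI : ∀ m, FiniteDimensional k (W m) := hM
    choose g hg using fun x : s => hs x.2
    let U : Submodule k M := ⨆ x : s, W (op (ψ (g x ⊗ₜ[k] (1 : H))) • m)
    haveI : FiniteDimensional k U := Submodule.finiteDimensional_iSup _
    refine Submodule.finiteDimensional_of_le (S₂ := U) (Submodule.span_le.2 ?_)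
    rintro _ ⟨a, rfl⟩
    have key : ∀ y ∈ Submodule.span Aᵐᵒᵖ (s : Set B),
        op (y * ψ ((1 : A) ⊗ₜ[k] t)) • m ∈ U := by
      intro y hy
      induction hy using Submodule.closure_induction with
      | zero => simp
      | add x y _ _ hx hy =>
        rw [add_mul, op_add, add_smul]
        exact U.add_mem hx hy
      | smul_mem c x hx =>
        refine Submodule.mem_iSup_of_mem (⟨x, hx⟩ : s) (Submodule.subset_span ⟨t • c.unop,
          htR _, ?_⟩)
        have hx' : ψ (g ⟨x, hx⟩ ⊗ₜ[k] t) = x := hg ⟨x, hx⟩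
        generalize g ⟨x, hx⟩ = aa at hx' ⊢
        rw [smul_smul, smul_smul, ← op_mul, ← op_mul, hinv _ _ _ _ (htR _), hA1]
        have : c • x = x * ψ (c.unop ⊗ₜ[k] (1 : H)) := rfl
        rw [this, ← hx', mul_assoc, hA1, hct]
        simp
    have hy := key (ψ (a ⊗ₜ[k] t)) (by
      rw [← hspan]
      exact Submodule.subset_span ⟨a, rfl⟩)
    rw [hinv _ _ _ _ hsmul_one, htt, mul_one] at hy
    exact hy
end

section
/- Let H be a finite-dimensional semisimple Hopf algebra, A a noetherian left H-module algebra, B = A#H, and t the idempotent integral of H. If B/(AtA) is finite dimensional (where AtA is the two-sided ideal of B generated by 1#t), then for every finitely generated right B-module M, the largest t-torsion submodule T(M) of M is finite dimensional. -/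
open TensorProduct MulOpposite

open Coalgebra HopfAlgebra in
theorem aux_casimir {k H : Type} [Field k] [Ring H] [HopfAlgebra k H] {ι : Type*}
    (t : H) (htint : ∀ h : H, h * t = (Coalgebra.counit (R := k) h) • t)
    (T : Repr k t ι) (h : H) :
    ∑ m ∈ T.index, (h * T.left m) ⊗ₜ[k] antipode k (T.right m) =
      ∑ m ∈ T.index, T.left m ⊗ₜ[k] (antipode k (T.right m) * h) := by
  let R := ℛ k h
  let Q : H → (H ⊗[k] H →ₗ[k] H ⊗[k] H) := fun r =>
    TensorProduct.map LinearMap.id ((LinearMap.mulRight k r).comp (antipode k))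
  let Φ : ι → (H ⊗[k] (H ⊗[k] H) →ₗ[k] H ⊗[k] H) := fun m =>
    TensorProduct.map (LinearMap.mulRight k (T.left m))
      ((LinearMap.mulLeft k (antipode k (T.right m))).comp
        ((LinearMap.mul' k H).comp (TensorProduct.map (antipode k) LinearMap.id)))
  have h1 : ∑ i ∈ R.index, Q (R.right i) (comul (R.left i * t)) =
      ∑ m ∈ T.index, T.left m ⊗ₜ[k] (antipode k (T.right m) * h) := by
    have e : ∀ i ∈ R.index, Q (R.right i) (comul (R.left i * t)) =
        ∑ m ∈ T.index, T.left m ⊗ₜ[k]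
          (antipode k (T.right m) * (counit (R := k) (R.left i) • R.right i)) := by
      intro i _
      rw [htint, map_smul, map_smul, ← T.eq, map_sum, Finset.smul_sum]
      simp [Q]
    rw [Finset.sum_congr rfl e, Finset.sum_comm]
    refine Finset.sum_congr rfl fun m _ => ?_
    rw [← TensorProduct.tmul_sum, ← Finset.mul_sum, sum_counit_smul R]
  have h2 : ∑ i ∈ R.index, Q (R.right i) (comul (R.left i * t)) =
      ∑ m ∈ T.index, Φ m (∑ i ∈ R.index, ∑ j ∈ (ℛ k (R.left i)).index,
        (ℛ k (R.left i)).left j ⊗ₜ[k] ((ℛ k (R.left i)).right j ⊗ₜ[k] R.right i)) := by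
    simp only [map_sum]
    rw [Finset.sum_comm (s := T.index)]
    refine Finset.sum_congr rfl fun i _ => ?_
    rw [Bialgebra.comul_mul, ← T.eq]
    conv_lhs => rw [← (ℛ k (R.left i)).eq]
    rw [Finset.sum_mul_sum, Finset.sum_comm]
    simp only [map_sum]
    refine Finset.sum_congr rfl fun m _ => Finset.sum_congr rfl fun j _ => ?_
    simp [Q, Φ, antipode_mul_antidistrib, mul_assoc]
  rw [← h1, h2, sum_tmul_tmul_eq R (fun i => ℛ k (R.left i)) (fun i => ℛ k (R.right i))]
  refine Finset.sum_congr rfl fun m _ => ?_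
  simp only [map_sum]
  have e : ∀ i ∈ R.index, ∑ j ∈ (ℛ k (R.right i)).index, Φ m (R.left i ⊗ₜ[k]
      ((ℛ k (R.right i)).left j ⊗ₜ[k] (ℛ k (R.right i)).right j)) =
      ((counit (R := k) (R.right i) • R.left i) * T.left m) ⊗ₜ[k] antipode k (T.right m) := by
    intro i _
    simp only [Φ, TensorProduct.map_tmul, LinearMap.comp_apply, LinearMap.mul'_apply,
      LinearMap.mulLeft_apply, LinearMap.mulRight_apply, LinearMap.id_apply]
    rw [← TensorProduct.tmul_sum, ← Finset.mul_sum, sum_antipode_mul_eq_smul]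
    simp [TensorProduct.smul_tmul]
  rw [Finset.sum_congr rfl e, ← TensorProduct.sum_tmul, ← Finset.sum_mul]
  congr 2
  have h3 := congrArg (TensorProduct.rid k H) (sum_tmul_counit_eq R)
  simp only [map_sum, TensorProduct.rid_tmul, one_smul] at h3
  exact h3.symm

open Coalgebra HopfAlgebra in
theorem aux_antipode_surj {k H : Type} [Field k] [Ring H] [HopfAlgebra k H]
    [FiniteDimensional k H]
    (t : H) (htcounit : Coalgebra.counit (R := k) t = 1)
    (htint : ∀ h : H, h * t = (Coalgebra.counit (R := k) h) • t) :
    Function.Surjective (antipode k (A := H)) := by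
  intro h
  let T := ℛ k t
  let e := Module.finBasis k H
  have key : ∀ φ : H →ₗ[k] H,
      ∑ m ∈ T.index, antipode k (T.right m) * φ (T.left m) ∈ LinearMap.range (antipode k (A := H)) := by
    intro φ
    have h1 : ∑ m ∈ T.index, antipode k (T.right m) * φ (T.left m) =
        ∑ i, ∑ m ∈ T.index, e.repr (T.left m) i • (antipode k (T.right m) * φ (e i)) := by
      rw [Finset.sum_comm]
      refine Finset.sum_congr rfl fun m _ => ?_
      conv_lhs => rw [← e.sum_repr (T.left m)]
      simp only [map_sum, map_smul, Finset.mul_sum, mul_smul_comm]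
    rw [h1]
    refine Submodule.sum_mem _ fun i _ => ?_
    have h2 := congr(TensorProduct.lid k H ((TensorProduct.map (e.coord i) LinearMap.id)
      $(aux_casimir t htint T (φ (e i)))))
    simp only [map_sum, TensorProduct.map_tmul, TensorProduct.lid_tmul, LinearMap.id_apply,
      Module.Basis.coord_apply] at h2
    rw [← h2]
    exact Submodule.sum_mem _ fun m _ => Submodule.smul_mem _ _ ⟨_, rfl⟩
  have h3 := key ((LinearMap.mulRight k h).comp ((antipode k).comp (antipode k)))
  have h4 : ∑ m ∈ T.index, antipode k (T.right m) *
      ((LinearMap.mulRight k h).comp ((antipode k).comp (antipode k))) (T.left m) = h := by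
    have : ∀ m ∈ T.index, antipode k (T.right m) *
      ((LinearMap.mulRight k h).comp ((antipode k).comp (antipode k))) (T.left m) =
      antipode k (antipode k (T.left m) * T.right m) * h := by
      intro m _
      simp [antipode_mul_antidistrib, mul_assoc]
    rw [Finset.sum_congr rfl this, ← Finset.sum_mul, ← map_sum, sum_antipode_mul_eq_smul T,
      htcounit]
    simp
  rw [h4] at h3
  exact h3

open Coalgebra HopfAlgebra WithConv in
theorem aux_commute {k H B : Type} [Field k] [Ring H] [HopfAlgebra k H] [Ring B] [Algebra k B]
    (u : H →ₐ[k] B) (G : H →ₗ[k] B) (x : B)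
    (hG : ∀ h : H, u h * x = ∑ i ∈ (ℛ k h).index, G ((ℛ k h).left i) * u ((ℛ k h).right i))
    (h : H) :
    x * u (antipode k h) =
      ∑ i ∈ (ℛ k h).index, u (antipode k ((ℛ k h).left i)) * G ((ℛ k h).right i) := by
  let uc : WithConv (H →ₗ[k] B) := toConv u.toLinearMap
  let us : WithConv (H →ₗ[k] B) := toConv (u.toLinearMap.comp (antipode k))
  let g : WithConv (H →ₗ[k] B) := toConv G
  let K : WithConv (H →ₗ[k] B) :=
    toConv ((LinearMap.toSpanSingleton k B x).comp (counit (R := k) (A := H)))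
  have e1 : us * uc = 1 := by
    ext h
    rw [(ℛ k h).convMul_apply]
    have := congr(u $(sum_antipode_mul_eq_algebraMap_counit (ℛ k h)))
    simpa [us, uc] using this
  have e2 : uc * us = 1 := by
    ext h
    rw [(ℛ k h).convMul_apply]
    have := congr(u $(sum_mul_antipode_eq_algebraMap_counit (ℛ k h)))
    simpa [us, uc] using this
  have e3 : g * uc = uc * K := by
    ext h
    rw [(ℛ k h).convMul_apply, (ℛ k h).convMul_apply]
    have h1 := congr(TensorProduct.rid k H $(sum_tmul_counit_eq (ℛ k h)))
    simp only [map_sum, TensorProduct.rid_tmul, one_smul] at h1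
    have h2 := congrArg (fun z => u z * x) h1
    beta_reduce at h2
    rw [hG h] at h2
    simpa [g, uc, K, Finset.sum_mul] using h2.symm
  have e4 : us * g = K * us := by
    calc us * g = us * (g * uc) * us := by rw [mul_assoc, mul_assoc, e2, mul_one]
      _ = K * us := by rw [e3, ← mul_assoc, e1, one_mul]
  have e5 := congr(($e4).ofConv h)
  have l : (us * g).ofConv h = _ := (ℛ k h).convMul_apply us g
  have r : (K * us).ofConv h = _ := (ℛ k h).convMul_apply K us
  rw [l, r] at e5
  have h1 := sum_counit_smul (ℛ k h)
  have h2 := congr(x * u (antipode k $h1))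
  rw [← h2]
  simpa [us, g, K, Finset.mul_sum] using e5.symm

theorem aux_noeth {R S ι : Type*} [Ring R] [Ring S] [IsNoetherianRing R] [Finite ι]
    (f : R →+* S) (v : ι → S)
    (hv : ∀ x : S, x ∈ AddSubmonoid.closure {y | ∃ r i, y = f r * v i}) : IsNoetherianRing S := by
  let : Module R S := Module.compHom S f
  have : IsScalarTower R S S := ⟨fun r x y => mul_assoc (f r) x y⟩
  have : Module.Finite R S := by
    refine ⟨Submodule.fg_def.2 ⟨Set.range v, Set.finite_range v, ?_⟩⟩
    rw [eq_top_iff]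
    intro x _
    induction hv x using AddSubmonoid.closure_induction with
    | mem y hy =>
      obtain ⟨r, i, rfl⟩ := hy
      exact Submodule.smul_mem _ r (Submodule.subset_span ⟨i, rfl⟩)
    | zero => exact Submodule.zero_mem _
    | add y z _ _ hy hz => exact Submodule.add_mem _ (hy trivial) (hz trivial)
  exact isNoetherian_of_tower R (isNoetherian_of_isNoetherianRing_of_finite R S)

theorem aux_ring {k B M : Type} [Field k] [Ring B] [Algebra k B] [IsNoetherianRing B]
    [IsNoetherianRing Bᵐᵒᵖ] (e : B) (J : Submodule k B) [FiniteDimensional k (B ⧸ J)]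
    (hJ : ∀ x ∈ J, x ∈ Submodule.span B {y | ∃ b, y = e * b})
    [AddCommGroup M] [Module Bᵐᵒᵖ M] [Module k M] [IsScalarTower k Bᵐᵒᵖ M]
    [Module.Finite Bᵐᵒᵖ M] (N : Submodule Bᵐᵒᵖ M)
    (hN : ∀ n ∈ N, FiniteDimensional k (Submodule.span k {x | ∃ b : B, x = op (b * e) • n})) :
    FiniteDimensional k N := by
  have : IsNoetherian Bᵐᵒᵖ M := isNoetherian_of_isNoetherianRing_of_finite _ _
  let L : M → (B →ₗ[k] M) := fun n =>
    { toFun := fun b => op b • n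
      map_add' := fun b c => by rw [op_add, add_smul]
      map_smul' := fun c b => by rw [op_smul, smul_assoc]; rfl }
  obtain ⟨s, hs, hsI⟩ := (Submodule.fg_span_iff_fg_span_finset_subset (R := B)
    {y : B | ∃ b, y = e * b}).1 (IsNoetherian.noetherian _)
  have key : ∀ n ∈ N, FiniteDimensional k (LinearMap.range (L n)) := by
    intro n hn
    have := hN n hn
    let W : Submodule k M := Submodule.span k {x | ∃ b : B, x = op (b * e) • n}
    have hnJ : FiniteDimensional k (J.map (L n)) := by
      have hs2 : ∀ y ∈ s, ∃ b, y = e * b := fun y hy => hs hy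
      choose! c hc using hs2
      let ρ : B → (M →ₗ[k] M) := fun c =>
        { toFun := fun m => op c • m
          map_add' := fun x y => smul_add _ x y
          map_smul' := fun r x => smul_comm (op c) r x }
      have hU : J.map (L n) ≤ ⨆ y : s, W.map (ρ (c y)) := by
        rintro _ ⟨x, hx, rfl⟩
        have hx' := hJ x hx
        rw [hsI, Submodule.mem_span_finset] at hx'
        obtain ⟨f, -, rfl⟩ := hx'
        rw [map_sum]
        refine Submodule.sum_mem _ fun y hy => ?_
        refine Submodule.mem_iSup_of_mem (⟨y, hy⟩ : s) ?_
        refine ⟨op (f y * e) • n, Submodule.subset_span ⟨f y, rfl⟩, ?_⟩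
        change op (c y) • op (f y * e) • n = op (f y * y) • n
        rw [smul_smul, ← op_mul, mul_assoc, ← hc y hy]
      have : FiniteDimensional k W := hN n hn
      exact Submodule.finiteDimensional_of_le hU
    obtain ⟨C, hC⟩ := J.exists_isCompl
    have : FiniteDimensional k C :=
      LinearEquiv.finiteDimensional (Submodule.quotientEquivOfIsCompl J C hC)
    rw [LinearMap.range_eq_map, ← hC.sup_eq_top, Submodule.map_sup]
    infer_instance
  obtain ⟨g, hg⟩ := IsNoetherian.noetherian N
  have hfin : FiniteDimensional k (⨆ n : g, LinearMap.range (L n) : Submodule k M) := by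
    have : ∀ n : g, FiniteDimensional k (LinearMap.range (L n)) := fun n =>
      key n (hg ▸ Submodule.subset_span n.2)
    infer_instance
  have hle : N.restrictScalars k ≤ ⨆ n : g, LinearMap.range (L n) := by
    intro x hx
    have hx' : x ∈ Submodule.span Bᵐᵒᵖ (g : Set M) := hg ▸ hx
    rw [Submodule.mem_span_finset] at hx'
    obtain ⟨f, -, rfl⟩ := hx'
    refine Submodule.sum_mem _ fun y hy => ?_
    exact Submodule.mem_iSup_of_mem (⟨y, hy⟩ : g) ⟨(f y).unop, rfl⟩
  exact Submodule.finiteDimensional_of_le hle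

/-- Let `H` be a finite-dimensional semisimple Hopf algebra, `A` a noetherian left
`H`-module algebra, `B = A#H` and `t` the idempotent integral of `H`.  If `B/(AtA)` is
finite-dimensional, then for every finitely generated right `B`-module `M` the largest
`t`-torsion submodule `T(M)` of `M` (the sum of all `t`-torsion submodules) is
finite-dimensional. -/
theorem largest_tTorsion_finiteDimensional
    (k H A B : Type) [Field k] [CharZero k]
    [Ring H] [HopfAlgebra k H] [FiniteDimensional k H] [IsSemisimpleRing H]
    [Ring A] [Algebra k A] [Module H A] [IsScalarTower k H A]
    [IsNoetherianRing A] [IsNoetherianRing Aᵐᵒᵖ]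
    (hsmul_mul : ∀ (h : H) (a b : A), h • (a * b) =
      (LinearMap.mul' k A) ((TensorProduct.map (actL k H A a) (actL k H A b))
        (Coalgebra.comul h)))
    (hsmul_one : ∀ h : H, h • (1 : A) = (Coalgebra.counit (R := k) h) • (1 : A))
    [Ring B] [Algebra k B] (ψ : (A ⊗[k] H) ≃ₗ[k] B)
    (hψone : ψ ((1 : A) ⊗ₜ[k] (1 : H)) = 1)
    (hψmul : ∀ (a b : A) (h g : H), ψ (a ⊗ₜ[k] h) * ψ (b ⊗ₜ[k] g) =
      ψ ((TensorProduct.map ((LinearMap.mulLeft k a).comp (actL k H A b))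
        (LinearMap.mulRight k g)) (Coalgebra.comul h)))
    (t : H) (htcounit : Coalgebra.counit (R := k) t = 1)
    (htint : ∀ h : H, h * t = (Coalgebra.counit (R := k) h) • t)
    (hAtA : FiniteDimensional k
      (B ⧸ Submodule.span k {x | ∃ a b : A, x = ψ (a ⊗ₜ[k] t) * ψ (b ⊗ₜ[k] (1 : H))})) :
    ∀ (M : Type) [AddCommGroup M] [Module Bᵐᵒᵖ M] [Module k M] [IsScalarTower k Bᵐᵒᵖ M]
      [Module.Finite Bᵐᵒᵖ M],
      FiniteDimensional k
        (sSup {N : Submodule Bᵐᵒᵖ M | IsTTorsion k H A B ψ t N} : Submodule Bᵐᵒᵖ M) := by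
  intro M _ _ _ _ _
  -- the two embeddings
  have hAmul : ∀ (a b : A) (g : H), ψ (a ⊗ₜ[k] (1 : H)) * ψ (b ⊗ₜ[k] g) = ψ ((a * b) ⊗ₜ[k] g) := by
    intro a b g
    rw [hψmul, Bialgebra.comul_one, Algebra.TensorProduct.one_def]
    simp [actL]
  let iA : A →+* B :=
    { toFun := fun a => ψ (a ⊗ₜ[k] (1 : H))
      map_one' := hψone
      map_mul' := fun a b => (hAmul a b 1).symm
      map_zero' := by simp
      map_add' := fun a b => by rw [TensorProduct.add_tmul, map_add] }
  have hu : ∀ h g : H, ψ ((1 : A) ⊗ₜ[k] h) * ψ ((1 : A) ⊗ₜ[k] g) = ψ ((1 : A) ⊗ₜ[k] (h * g)) := by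
    intro h g
    rw [hψmul, ← (Coalgebra.Repr.arbitrary k h).eq, map_sum]
    congr 1
    conv_rhs => rw [← Coalgebra.sum_counit_smul (Coalgebra.Repr.arbitrary k h)]
    rw [Finset.sum_mul, TensorProduct.tmul_sum]
    refine Finset.sum_congr rfl fun i _ => ?_
    simp [actL, hsmul_one, TensorProduct.smul_tmul]
  let u : H →ₐ[k] B := AlgHom.ofLinearMap
    (ψ.toLinearMap.comp (TensorProduct.mk k A H 1)) hψone (fun h g => (hu h g).symm)
  have hu_apply : ∀ h, u h = ψ ((1 : A) ⊗ₜ[k] h) := fun h => rfl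
  have hiA_apply : ∀ a, iA a = ψ (a ⊗ₜ[k] (1 : H)) := fun a => rfl
  have hAu : ∀ a h, iA a * u h = ψ (a ⊗ₜ[k] h) := by
    intro a h
    rw [hu_apply, hiA_apply, hAmul, mul_one]
  have hiAsmul : ∀ (c : k) (a : A), iA (c • a) = c • iA a := by
    intro c a
    rw [hiA_apply, hiA_apply, ← TensorProduct.smul_tmul', map_smul]
  let e := Module.finBasis k H
  -- left noetherian
  have hBl : IsNoetherianRing B := by
    refine aux_noeth iA (fun i => u (e i)) fun x => ?_
    obtain ⟨z, rfl⟩ := ψ.surjective x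
    induction z with
    | zero => rw [map_zero]; exact zero_mem _
    | add y z hy hz => rw [map_add]; exact add_mem hy hz
    | tmul a h =>
      rw [← hAu, ← e.sum_repr h, map_sum, Finset.mul_sum]
      refine sum_mem fun i _ => AddSubmonoid.subset_closure ⟨e.repr h i • a, i, ?_⟩
      rw [hiAsmul, map_smul, mul_smul_comm, smul_mul_assoc]
  -- right noetherian
  have hBr : IsNoetherianRing Bᵐᵒᵖ := by
    refine aux_noeth iA.op (fun i => op (u (e i))) fun x => ?_
    have hgen : ∀ h a, op (u h * iA a) ∈ AddSubmonoid.closure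
        {y | ∃ r i, y = iA.op r * op (u (e i))} := by
      intro h a
      rw [← e.sum_repr h, map_sum, Finset.sum_mul, Finset.op_sum]
      refine sum_mem fun i _ => AddSubmonoid.subset_closure ⟨op (e.repr h i • a), i, ?_⟩
      change _ = op (iA (e.repr h i • a)) * op (u (e i))
      rw [← op_mul, hiAsmul, map_smul, mul_smul_comm, smul_mul_assoc]
    obtain ⟨x, rfl⟩ := op_surjective x
    obtain ⟨z, rfl⟩ := ψ.surjective x
    induction z with
    | zero => rw [map_zero]; exact zero_mem _
    | add y z hy hz => rw [map_add, op_add]; exact add_mem hy hz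
    | tmul a h =>
      obtain ⟨h, rfl⟩ := aux_antipode_surj t htcounit htint h
      let G : H →ₗ[k] B := ψ.toLinearMap.comp
        (((TensorProduct.mk k A H).flip 1).comp (actL k H A a))
      have hG_apply : ∀ h, G h = iA (h • a) := fun h => rfl
      rw [← hAu, aux_commute u G (iA a) _ h, Finset.op_sum]
      · refine sum_mem fun i _ => ?_
        rw [hG_apply]
        exact hgen _ _
      · intro h
        rw [hu_apply, hiA_apply, hψmul]
        conv_lhs => rw [← (Coalgebra.Repr.arbitrary k h).eq]
        rw [map_sum, map_sum]
        refine Finset.sum_congr rfl fun i _ => ?_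
        rw [hG_apply, hAu]
        simp [actL]
  have hBt : ∀ b : B, ∃ a : A, b * u t = ψ (a ⊗ₜ[k] t) := by
    intro b
    obtain ⟨z, rfl⟩ := ψ.surjective b
    induction z with
    | zero => exact ⟨0, by simp⟩
    | add y z hy hz =>
      obtain ⟨a, ha⟩ := hy
      obtain ⟨b, hb⟩ := hz
      exact ⟨a + b, by rw [map_add, add_mul, ha, hb, TensorProduct.add_tmul, map_add]⟩
    | tmul a h =>
      refine ⟨Coalgebra.counit (R := k) h • a, ?_⟩
      rw [← hAu, mul_assoc, ← map_mul, htint, map_smul, ← hAu, hiAsmul, mul_smul_comm,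
        smul_mul_assoc]
  refine aux_ring (u t) (Submodule.span k
    {x | ∃ a b : A, x = ψ (a ⊗ₜ[k] t) * ψ (b ⊗ₜ[k] (1 : H))}) ?_ _ ?_
  · intro x hx
    induction hx using Submodule.span_induction with
    | mem x hx =>
      obtain ⟨a, b, rfl⟩ := hx
      rw [← hAu, mul_assoc]
      exact Submodule.smul_mem _ (iA a) (Submodule.subset_span ⟨_, rfl⟩)
    | zero => exact zero_mem _
    | add x y _ _ hx hy => exact add_mem hx hy
    | smul c x _ hx =>
      rw [Algebra.smul_def]
      exact Submodule.smul_mem _ (algebraMap k B c) hx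
  · intro n hn
    rw [sSup_eq_iSup'] at hn
    induction hn using Submodule.iSup_induction' with
    | mem N x hx =>
      have h1 := N.2 ⟨x, hx⟩
      have h2 := Module.Finite.map (Submodule.span k
        {y | ∃ a : A, y = op (ψ (a ⊗ₜ[k] t)) • (⟨x, hx⟩ : N.1)}) (N.1.subtype.restrictScalars k)
      refine Submodule.finiteDimensional_of_le (Submodule.span_le.2 ?_) (S₂ := Submodule.map
        (N.1.subtype.restrictScalars k) (Submodule.span k
        {y | ∃ a : A, y = op (ψ (a ⊗ₜ[k] t)) • (⟨x, hx⟩ : N.1)}))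
      rintro _ ⟨b, rfl⟩
      obtain ⟨a, ha⟩ := hBt b
      rw [ha]
      exact ⟨op (ψ (a ⊗ₜ[k] t)) • (⟨x, hx⟩ : N.1), Submodule.subset_span ⟨a, rfl⟩, rfl⟩
    | zero =>
      refine Submodule.finiteDimensional_of_le (S₂ := (⊥ : Submodule k M))
        (Submodule.span_le.2 ?_)
      rintro _ ⟨b, rfl⟩
      simp
    | add x y _ _ hx hy =>
      refine Submodule.finiteDimensional_of_le (Submodule.span_le.2 ?_)
        (S₂ := Submodule.span k {z | ∃ b : B, z = op (b * u t) • x} ⊔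
          Submodule.span k {z | ∃ b : B, z = op (b * u t) • y})
      rintro _ ⟨b, rfl⟩
      rw [smul_add]
      exact Submodule.add_mem_sup (Submodule.subset_span ⟨b, rfl⟩)
        (Submodule.subset_span ⟨b, rfl⟩)
end
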